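/- For the family f_L = χ_{R_L} − χ_{R₀} (L > 2), one has lim_{L→∞} ‖f_L‖_{H¹} / ‖M f_L‖₁ = +∞; consequently there is no constant C with ‖f‖_{H¹} ≤ C‖Mf‖₁ for all f ∈ H¹. -/

import Mathlib

open MeasureTheory Real Filter Set
open scoped ENNReal

noncomputable section

/-- The group `G = ℝ² ⋊ ℝ⁺`, realized as triples `(x₁, x₂, a)` (only `a > 0` is relevant). -/
abbrev G : Type := ℝ × ℝ × ℝ

/-- Group product `(x₁,x₂,a)·(x₁',x₂',a') = (x₁+a x₁', x₂+a x₂', a a')`. -/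
def gMul (x y : G) : G := (x.1 + x.2.2 * y.1, x.2.1 + x.2.2 * y.2.1, x.2.2 * y.2.2)

/-- Group inverse `(x₁,x₂,a)⁻¹ = (−x₁/a, −x₂/a, 1/a)`. -/
def gInv (x : G) : G := (-x.1 / x.2.2, -x.2.1 / x.2.2, 1 / x.2.2)

/-- The identity `e = (0,0,1)`. -/
def gE : G := (0, 0, 1)

/-- The right Haar measure `dρ = a⁻¹ dx₁ dx₂ da` (supported where `a > 0`). -/
def ρG : Measure G :=
  (volume : Measure G).withDensity fun x => ENNReal.ofReal (if 0 < x.2.2 then x.2.2⁻¹ else 0)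

/-- The modular function `δ(x₁,x₂,a) = a⁻²`. -/
def deltaG (x : G) : ℝ := (x.2.2 ^ 2)⁻¹

/-- `|x| = √(x₁² + x₂²)`. -/
def normG (x : G) : ℝ := Real.sqrt (x.1 ^ 2 + x.2.1 ^ 2)

/-- `cosh r(x) = (a + a⁻¹ + a⁻¹|x|²)/2`. -/
def coshArg (x : G) : ℝ := (x.2.2 + x.2.2⁻¹ + x.2.2⁻¹ * (x.1 ^ 2 + x.2.1 ^ 2)) / 2

/-- `r(x) ≥ 0` is determined by `cosh r(x) = coshArg x`; explicitly `r = arcosh (coshArg x)`. -/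
def rG (x : G) : ℝ := Real.log (coshArg x + Real.sqrt (coshArg x ^ 2 - 1))

/-- The left-invariant distance `d(x,y) = r(x⁻¹y)`. -/
def dG (x y : G) : ℝ := rG (gMul (gInv x) y)

/-- The heat kernel
`p_t(x) = (8π^{3/2})⁻¹ δ(x)^{1/2} (r(x)/sinh r(x)) t^{−3/2} exp(−r(x)²/(4t))`,
with `r/sinh r := 1` at `x = e`. -/
def heatK (t : ℝ) (x : G) : ℝ :=
  (8 * Real.pi ^ ((3 : ℝ)/2))⁻¹ * Real.sqrt (deltaG x) *
    (if rG x = 0 then 1 else rG x / Real.sinh (rG x)) *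
    t ^ (-(3 : ℝ)/2) * Real.exp (-(rG x ^ 2) / (4 * t))

/-- Convolution `f ∗ p_t(x) = ∫ f(xy⁻¹) p_t(y) dρ(y)`. -/
def convHeat (f : G → ℝ) (t : ℝ) (x : G) : ℝ := ∫ y, f (gMul x (gInv y)) * heatK t y ∂ρG

/-- The heat maximal operator `Mf(x) = sup_{t>0} |f ∗ p_t(x)|` (valued in `ℝ≥0∞`). -/
def maxHeat (f : G → ℝ) (x : G) : ℝ≥0∞ :=
  ⨆ (t : ℝ) (_ : 0 < t), ENNReal.ofReal |convHeat f t x|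

/-- Calderón–Zygmund sets. -/
def IsCZ (R : Set G) : Prop :=
  ∃ c : G, ∃ L r : ℝ, 0 < c.2.2 ∧ 0 < L ∧ 0 < r ∧
    R = Set.Icc (c.1 - L/2) (c.1 + L/2) ×ˢ
        (Set.Icc (c.2.1 - L/2) (c.2.1 + L/2) ×ˢ
         Set.Icc (c.2.2 * Real.exp (-r)) (c.2.2 * Real.exp r)) ∧
    (r < 1 → Real.exp 2 * c.2.2 * r ≤ L ∧ L < Real.exp 8 * c.2.2 * r) ∧
    (1 ≤ r → c.2.2 * Real.exp (2*r) ≤ L ∧ L < c.2.2 * Real.exp (8*r))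

/-- Atoms: `A ∈ L¹(ρ)` supported in a Calderón–Zygmund set `R`, with
`‖A‖_∞ ≤ ρ(R)⁻¹` and `∫ A dρ = 0`. -/
def IsAtomG (A : G → ℝ) : Prop :=
  Integrable A ρG ∧
  ∃ R : Set G, IsCZ R ∧ (∀ x ∉ R, A x = 0) ∧
    eLpNorm A ⊤ ρG ≤ (ρG R)⁻¹ ∧
    ∫ x, A x ∂ρG = 0

/-- `f = Σ_j lam_j A_j` with atoms `A_j`, `Σ_j |lam_j| < ∞`, converging in `L¹(ρ)`. -/
def IsH1Decomp (f : G → ℝ) (lam : ℕ → ℝ) (A : ℕ → G → ℝ) : Prop :=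
  (∀ j, IsAtomG (A j)) ∧ Summable (fun j => |lam j|) ∧
  Tendsto (fun N => eLpNorm (fun x => f x - ∑ j ∈ Finset.range N, lam j * A j x) 1 ρG)
    atTop (nhds 0)

/-- The Hardy space `H¹`. -/
def MemH1 (f : G → ℝ) : Prop :=
  Integrable f ρG ∧ ∃ lam A, IsH1Decomp f lam A

/-- `‖f‖_{H¹} = inf Σ_j |lam_j|` over all atomic decompositions. -/
def H1norm (f : G → ℝ) : ℝ :=
  sInf {s | ∃ lam A, IsH1Decomp f lam A ∧ s = ∑' j, |lam j|}

/-- The left-invariant vector field `X₀ = a ∂_a`. -/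
def X0 (f : G → ℝ) (x : G) : ℝ := x.2.2 * deriv (fun s => f (x.1, x.2.1, s)) x.2.2

/-- The left-invariant vector field `X₁ = a ∂_{x₁}`. -/
def X1 (f : G → ℝ) (x : G) : ℝ := x.2.2 * deriv (fun s => f (s, x.2.1, x.2.2)) x.1

/-- The left-invariant vector field `X₂ = a ∂_{x₂}`. -/
def X2 (f : G → ℝ) (x : G) : ℝ := x.2.2 * deriv (fun s => f (x.1, s, x.2.2)) x.2.1

/-- `‖∇p_t(x)‖`, the Euclidean norm of `(X₀p_t, X₁p_t, X₂p_t)` at `x`. -/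
def gradHeatNorm (t : ℝ) (x : G) : ℝ :=
  Real.sqrt (X0 (heatK t) x ^ 2 + X1 (heatK t) x ^ 2 + X2 (heatK t) x ^ 2)

/-- The Poisson kernel `q_t(x) = π⁻² δ(x)^{1/2} (r(x)/sinh r(x)) · t/(t²+r(x)²)²`. -/
def poissonK (t : ℝ) (x : G) : ℝ :=
  (Real.pi ^ 2)⁻¹ * Real.sqrt (deltaG x) *
    (if rG x = 0 then 1 else rG x / Real.sinh (rG x)) *
    (t / (t ^ 2 + rG x ^ 2) ^ 2)

/-- Convolution `f ∗ q_t(x) = ∫ f(xy⁻¹) q_t(y) dρ(y)`. -/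
def convPoisson (f : G → ℝ) (t : ℝ) (x : G) : ℝ := ∫ y, f (gMul x (gInv y)) * poissonK t y ∂ρG

/-- The Poisson maximal operator `M̃f(x) = sup_{t>0} |f ∗ q_t(x)|`. -/
def maxPoisson (f : G → ℝ) (x : G) : ℝ≥0∞ :=
  ⨆ (t : ℝ) (_ : 0 < t), ENNReal.ofReal |convPoisson f t x|

/-- `G_{r₁}(x) = sup_{z ∈ B(x,r₁/2)} sup_{t>0} ‖∇p_t(z)‖`. -/
def Gsup (r1 : ℝ) (x : G) : ℝ≥0∞ :=
  ⨆ (z : G) (_ : 0 < z.2.2 ∧ dG x z < r1 / 2) (t : ℝ) (_ : 0 < t),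
    ENNReal.ofReal (gradHeatNorm t z)

/-- `R₀ = [−1,1]×[−1,1]×[e⁻¹,e]`. -/
def R0set : Set G :=
  Set.Icc (-1 : ℝ) 1 ×ˢ (Set.Icc (-1 : ℝ) 1 ×ˢ Set.Icc (Real.exp (-1)) (Real.exp 1))

/-- `R_L = [L−1,L+1]×[−1,1]×[e⁻¹,e]`. -/
def RLset (L : ℝ) : Set G :=
  Set.Icc (L - 1) (L + 1) ×ˢ (Set.Icc (-1 : ℝ) 1 ×ˢ Set.Icc (Real.exp (-1)) (Real.exp 1))

/-- `f_L = χ_{R_L} − χ_{R₀}`. -/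
def fL (L : ℝ) : G → ℝ := fun x =>
  (RLset L).indicator (fun _ => (1 : ℝ)) x - R0set.indicator (fun _ => (1 : ℝ)) x

/-- The mean of `g` over `R` with respect to `ρ`. -/
def czMean (g : G → ℝ) (R : Set G) : ℝ := (∫ x in R, g x ∂ρG) / (ρG R).toReal

/-- `‖g‖_{BMO} = sup_R ρ(R)⁻¹ ∫_R |g − g_R| dρ` over Calderón–Zygmund sets `R`. -/
def czBMO (g : G → ℝ) : ℝ≥0∞ :=
  ⨆ (R : Set G) (_ : IsCZ R),
    (ρG R)⁻¹ * ∫⁻ x in R, ENNReal.ofReal |g x - czMean g R| ∂ρG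

/-- `‖h‖_{BMO(ℝ)} = sup_Q |Q|⁻¹ ∫_Q |h − h_Q|` over bounded intervals `Q ⊂ ℝ`. -/
def lineBMO (h : ℝ → ℝ) : ℝ≥0∞ :=
  ⨆ (a : ℝ) (b : ℝ) (_ : a < b),
    (ENNReal.ofReal (b - a))⁻¹ *
      ∫⁻ s in Set.Icc a b, ENNReal.ofReal |h s - (∫ u in Set.Icc a b, h u) / (b - a)|

/-- `2R₀ = [−2,2]×[−2,2]×[e⁻²,e²]`. -/
def twoR0set : Set G :=
  Set.Icc (-2 : ℝ) 2 ×ˢ (Set.Icc (-2 : ℝ) 2 ×ˢ Set.Icc (Real.exp (-2)) (Real.exp 2))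

/-- The set `{x₁ > 3, |x₂| < 1, e⁻¹ < a < e}`. -/
def domSpecial : Set G :=
  {x : G | 3 < x.1 ∧ |x.2.1| < 1 ∧ Real.exp (-1) < x.2.2 ∧ x.2.2 < Real.exp 1}

/-- The function equal to `1/(x₁ (log x₁)^{3/2})` on `{x₁ > 3, |x₂| < 1, e⁻¹ < a < e}`,
to `c₀` on `R₀`, and `0` elsewhere. -/
def fSpecial (c0 : ℝ) : G → ℝ := fun x =>
  domSpecial.indicator (fun y => (y.1 * Real.log y.1 ^ ((3 : ℝ)/2))⁻¹) x
    + R0set.indicator (fun _ => c0) x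

/-! The norm `‖f_L‖_{H¹}` grows at least like `log L`, by duality with the truncated logarithm of
`1 + |x₁|`, whose BMO seminorm is bounded independently of `L`, while `‖M f_L‖₁` grows at most
like `√(log L)`. For the latter, the supremum over `t` of the heat kernel integrated over a
translate of `R₀` is, up to constants and away from the box, `(1 + |x|²)⁻¹ (1 + r(x))⁻²` times a
function of `a`, and for `|x₁|` beyond a multiple of `L` the cancellation of `f_L` gains a factor
`L / |x₁|`. Since `1 + r(x)` dominates both `1 + |log a|` and `1 + log (1 + |x₁|)`, its square
dominates `(1 + |log a|)^{3/2} (1 + log (1 + |x₁|))^{1/2}`; the first factor makes the integral in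
`a` converge, and the second leaves `∫ dx₁ / (|x₁| √(log |x₁|))` up to `L`, which is of order
`√(log L)`.
-/

/-- Haar measure `da/a` of the multiplicative group `ℝ⁺`, as a measure on `ℝ`. -/
def haarPos : Measure ℝ := Measure.map Real.exp volume

instance : SFinite haarPos := by unfold haarPos; infer_instance

lemma lintegral_haarPos {f : ℝ → ℝ≥0∞} (hf : Measurable f) :
    ∫⁻ a, f a ∂haarPos = ∫⁻ u, f (Real.exp u) :=
  lintegral_map hf Real.measurable_exp

lemma lintegral_eq_lintegral_exp {f : ℝ → ℝ≥0∞} (hf : ∀ a ≤ 0, f a = 0) :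
    ∫⁻ a, f a = ∫⁻ u, ENNReal.ofReal (Real.exp u) * f (Real.exp u) := by
  have hsupport : f.support ⊆ Ioi 0 := fun a ha => by
    by_contra h
    exact ha (hf a (not_lt.1 h))
  rw [← setLIntegral_eq_of_support_subset hsupport, ← Real.range_exp, ← image_univ,
    lintegral_image_eq_lintegral_abs_deriv_mul MeasurableSet.univ
      (fun u _ => (Real.hasDerivAt_exp u).hasDerivWithinAt) Real.exp_injective.injOn,
    setLIntegral_univ]
  simp only [Real.abs_exp]

lemma measurable_haarDensity :
    Measurable fun a : ℝ => ENNReal.ofReal (if 0 < a then a⁻¹ else 0) :=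
  (Measurable.ite measurableSet_Ioi measurable_inv measurable_const).ennreal_ofReal

lemma haarPos_eq_withDensity :
    haarPos = volume.withDensity fun a => ENNReal.ofReal (if 0 < a then a⁻¹ else 0) := by
  ext S hS
  rw [withDensity_apply _ hS, ← lintegral_indicator hS, lintegral_eq_lintegral_exp,
    ← lintegral_indicator_one hS, lintegral_haarPos (measurable_one.indicator hS)]
  · refine lintegral_congr fun u => ?_
    by_cases hu : Real.exp u ∈ S
    · rw [indicator_of_mem hu, indicator_of_mem hu, if_pos (Real.exp_pos u),
        ← ENNReal.ofReal_mul (Real.exp_pos u).le, mul_inv_cancel₀ (Real.exp_pos u).ne',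
        ENNReal.ofReal_one, Pi.one_apply]
    · rw [indicator_of_notMem hu, indicator_of_notMem hu, mul_zero]
  · intro a ha
    refine indicator_apply_eq_zero.2 fun _ => ?_
    rw [if_neg ha.not_gt, ENNReal.ofReal_zero]

lemma haarPos_Icc_exp (p q : ℝ) :
    haarPos (Icc (Real.exp p) (Real.exp q)) = ENNReal.ofReal (q - p) := by
  have hpreimage : Real.exp ⁻¹' Icc (Real.exp p) (Real.exp q) = Icc p q := by
    ext u
    simp only [mem_preimage, mem_Icc, Real.exp_le_exp]
  rw [haarPos, Measure.map_apply Real.measurable_exp measurableSet_Icc, hpreimage,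
    Real.volume_Icc]

lemma ae_haarPos_pos : ∀ᵐ a ∂haarPos, 0 < a :=
  (ae_map_iff Real.measurable_exp.aemeasurable measurableSet_Ioi).2 (ae_of_all _ Real.exp_pos)

lemma measurePreserving_mul_right_haarPos {c : ℝ} (hc : 0 < c) :
    MeasurePreserving (fun a => a * c) haarPos haarPos := by
  refine ⟨by fun_prop, ?_⟩
  have hexp : (fun a => a * c) ∘ Real.exp = Real.exp ∘ fun u => u + Real.log c := by
    ext u
    simp only [Function.comp_apply, Real.exp_add, Real.exp_log hc]
  rw [haarPos, Measure.map_map (by fun_prop) Real.measurable_exp, hexp,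
    ← Measure.map_map Real.measurable_exp (by fun_prop),
    (measurePreserving_add_right volume (Real.log c)).map_eq]

lemma ρG_eq_prod : ρG = (volume : Measure ℝ).prod ((volume : Measure ℝ).prod haarPos) := by
  rw [haarPos_eq_withDensity, prod_withDensity_right measurable_haarDensity]
  exact (prod_withDensity_right (measurable_haarDensity.comp measurable_snd)).symm

instance : SFinite ρG := by rw [ρG_eq_prod]; infer_instance

lemma ae_ρG_pos : ∀ᵐ x ∂ρG, 0 < x.2.2 := by
  rw [ρG_eq_prod]
  exact Measure.quasiMeasurePreserving_snd.ae
    (Measure.quasiMeasurePreserving_snd.ae ae_haarPos_pos)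

lemma ρG_prod (I J S : Set ℝ) : ρG (I ×ˢ (J ×ˢ S)) = volume I * (volume J * haarPos S) := by
  rw [ρG_eq_prod, Measure.prod_prod, Measure.prod_prod]

lemma measurePreserving_gMul_right {z : G} (hz : 0 < z.2.2) :
    MeasurePreserving (fun y => gMul y z) ρG ρG := by
  set plane : Measure (ℝ × ℝ) := (volume : Measure ℝ).prod volume
  have hreorder : MeasurePreserving (fun y : G => (y.2.2, (y.1, y.2.1))) ρG
      (haarPos.prod plane) := by
    rw [ρG_eq_prod]
    exact Measure.measurePreserving_swap.comp
      (measurePreserving_prodAssoc volume volume haarPos).symm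
  have hshear : MeasurePreserving
      (fun p : ℝ × ℝ × ℝ => (p.1 * z.2.2, p.2 + (p.1 * z.1, p.1 * z.2.1)))
      (haarPos.prod plane) (haarPos.prod plane) := by
    refine (measurePreserving_mul_right_haarPos hz).skew_product
      (g := fun a v => v + (a * z.1, a * z.2.1)) (by unfold Function.uncurry; fun_prop) ?_
    exact ae_of_all _ fun a => (measurePreserving_add_right plane _).map_eq
  have hback : MeasurePreserving (fun p : ℝ × ℝ × ℝ => ((p.2.1, p.2.2, p.1) : G))
      (haarPos.prod plane) ρG := by
    rw [ρG_eq_prod]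
    exact (measurePreserving_prodAssoc volume volume haarPos).comp
      Measure.measurePreserving_swap
  exact hback.comp (hshear.comp hreorder)

lemma measurePreserving_add_fst (c : ℝ) :
    MeasurePreserving (fun x : G => ((c + x.1, x.2) : G)) ρG ρG := by
  rw [ρG_eq_prod]
  exact (measurePreserving_add_left volume c).prod (MeasurePreserving.id _)

lemma measurable_gMul_left (x : G) : Measurable (gMul x) := by
  unfold gMul; fun_prop

lemma measurable_gInv : Measurable gInv := by
  unfold gInv; fun_prop

lemma measurable_coshArg : Measurable coshArg := by
  unfold coshArg; fun_prop

lemma measurable_rG : Measurable rG :=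
  (measurable_coshArg.add ((measurable_coshArg.pow_const 2).sub_const 1).sqrt).log

lemma measurable_heatK (t : ℝ) : Measurable (heatK t) := by
  unfold heatK deltaG
  have hr := measurable_rG
  have hspherical : Measurable fun y => if rG y = 0 then 1 else rG y / Real.sinh (rG y) :=
    Measurable.ite (hr (measurableSet_singleton 0)) measurable_const (by fun_prop)
  fun_prop

lemma measurableSet_RLset (L : ℝ) : MeasurableSet (RLset L) :=
  measurableSet_Icc.prod (measurableSet_Icc.prod measurableSet_Icc)

lemma measurableSet_R0set : MeasurableSet R0set :=
  measurableSet_Icc.prod (measurableSet_Icc.prod measurableSet_Icc)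

lemma gMul_assoc (x y z : G) : gMul (gMul x y) z = gMul x (gMul y z) := by
  ext <;> simp only [gMul] <;> ring

lemma gInv_gMul_cancel_left {w : G} (hw : 0 < w.2.2) (x : G) : gMul (gInv w) (gMul w x) = x := by
  ext <;> simp only [gMul, gInv] <;> field_simp <;> ring

lemma gInv_gMul {x y : G} (hx : 0 < x.2.2) (hy : 0 < y.2.2) :
    gInv (gMul x y) = gMul (gInv y) (gInv x) := by
  ext <;> simp only [gMul, gInv] <;> field_simp <;> ring

lemma gInv_height_pos {x : G} (hx : 0 < x.2.2) : 0 < (gInv x).2.2 := by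
  simpa only [gInv] using one_div_pos.2 hx

lemma coshArg_eq {x : G} (hx : 0 < x.2.2) :
    coshArg x = (1 + x.2.2 ^ 2 + (x.1 ^ 2 + x.2.1 ^ 2)) / (2 * x.2.2) := by
  unfold coshArg
  field_simp
  ring

lemma coshArg_gInv {x : G} (hx : 0 < x.2.2) : coshArg (gInv x) = coshArg x := by
  rw [coshArg_eq hx, coshArg_eq (gInv_height_pos hx)]
  simp only [gInv]
  field_simp
  ring

lemma coshArg_gMul_le {x y : G} (hx : 0 < x.2.2) (hy : 0 < y.2.2) :
    coshArg (gMul x y) ≤ 2 * coshArg x * coshArg y := by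
  obtain ⟨p₁, p₂, a⟩ := x
  obtain ⟨q₁, q₂, b⟩ := y
  have cauchySchwarz : (p₁ + a * q₁) ^ 2 + (p₂ + a * q₂) ^ 2 ≤
      (a ^ 2 + (p₁ ^ 2 + p₂ ^ 2)) * (1 + (q₁ ^ 2 + q₂ ^ 2)) := by
    nlinarith [sq_nonneg (p₁ * q₁ + p₂ * q₂ - a), sq_nonneg (p₁ * q₂ - p₂ * q₁)]
  have hxy : 0 < (gMul (p₁, p₂, a) (q₁, q₂, b)).2.2 := mul_pos hx hy
  rw [coshArg_eq hx, coshArg_eq hy, coshArg_eq hxy]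
  dsimp only [gMul] at hx hy ⊢
  rw [mul_assoc, div_mul_div_comm, mul_div_assoc', div_le_div_iff₀ (by positivity) (by positivity)]
  suffices h : 1 + (a * b) ^ 2 + ((p₁ + a * q₁) ^ 2 + (p₂ + a * q₂) ^ 2) ≤
      (1 + a ^ 2 + (p₁ ^ 2 + p₂ ^ 2)) * (1 + b ^ 2 + (q₁ ^ 2 + q₂ ^ 2)) by
    nlinarith [mul_le_mul_of_nonneg_left h (mul_pos hx hy).le]
  nlinarith [sq_nonneg (b * p₁), sq_nonneg (b * p₂), sq_nonneg b, sq_nonneg q₁, sq_nonneg q₂]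

lemma coshArg_le_of_gMul {w x : G} (hw : 0 < w.2.2) (hx : 0 < x.2.2) :
    coshArg x ≤ 2 * coshArg w * coshArg (gMul w x) := by
  have h := coshArg_gMul_le (gInv_height_pos hw) (y := gMul w x) (mul_pos hw hx)
  rwa [gInv_gMul_cancel_left hw, coshArg_gInv hw] at h

lemma cosh_log_le_coshArg {x : G} (hx : 0 < x.2.2) : Real.cosh (Real.log x.2.2) ≤ coshArg x := by
  rw [Real.cosh_log hx, coshArg]
  have : 0 ≤ x.2.2⁻¹ * (x.1 ^ 2 + x.2.1 ^ 2) := by positivity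
  linarith

lemma one_le_coshArg {x : G} (hx : 0 < x.2.2) : 1 ≤ coshArg x :=
  (Real.one_le_cosh _).trans (cosh_log_le_coshArg hx)

lemma rG_eq_arcosh (x : G) : rG x = Real.arcosh (coshArg x) := rfl

lemma cosh_rG {x : G} (hx : 0 < x.2.2) : Real.cosh (rG x) = coshArg x :=
  Real.cosh_arcosh (one_le_coshArg hx)

lemma rG_nonneg {x : G} (hx : 0 < x.2.2) : 0 ≤ rG x :=
  Real.arcosh_nonneg (one_le_coshArg hx)

lemma abs_log_le_rG {x : G} (hx : 0 < x.2.2) : |Real.log x.2.2| ≤ rG x := by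
  have h := cosh_log_le_coshArg hx
  rwa [← cosh_rG hx, Real.cosh_le_cosh, abs_of_nonneg (rG_nonneg hx)] at h

lemma rG_le_rG_add {x y : G} (hx : 0 < x.2.2) (hy : 0 < y.2.2) {k : ℝ} (hk : 0 ≤ k)
    (h : coshArg x ≤ Real.cosh k * coshArg y) : rG x ≤ rG y + k := by
  have hcosh : Real.cosh (rG x) ≤ Real.cosh (rG y + k) := by
    rw [cosh_rG hx, Real.cosh_add, cosh_rG hy]
    nlinarith [mul_nonneg (Real.sinh_nonneg_iff.2 (rG_nonneg hy)) (Real.sinh_nonneg_iff.2 hk)]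
  rwa [Real.cosh_le_cosh, abs_of_nonneg (rG_nonneg hx),
    abs_of_nonneg (add_nonneg (rG_nonneg hy) hk)] at hcosh

/-- The square `1 + |x|²` of the Japanese bracket of the horizontal component. -/
def bracketSq (x : G) : ℝ := 1 + x.1 ^ 2 + x.2.1 ^ 2

lemma bracketSq_pos (x : G) : 0 < bracketSq x := by
  unfold bracketSq; positivity

lemma bracketSq_le_mul_coshArg {x : G} (hx : 0 < x.2.2) :
    bracketSq x ≤ 2 * x.2.2 * coshArg x := by
  rw [coshArg_eq hx, mul_div_cancel₀ _ (by positivity), bracketSq]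
  nlinarith [sq_nonneg x.2.2]

lemma bracketSq_le_coshArg_sq {x : G} (hx : 0 < x.2.2) : bracketSq x ≤ coshArg x ^ 2 := by
  rw [coshArg_eq hx, div_pow, le_div_iff₀ (by positivity), bracketSq]
  nlinarith [sq_nonneg (1 + x.1 ^ 2 + x.2.1 ^ 2 - x.2.2 ^ 2)]

lemma abs_fst_le_coshArg {x : G} (hx : 0 < x.2.2) : |x.1| ≤ coshArg x := by
  refine abs_le_of_sq_le_sq ?_ (zero_le_one.trans (one_le_coshArg hx))
  refine le_trans ?_ (bracketSq_le_coshArg_sq hx)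
  unfold bracketSq
  nlinarith [sq_nonneg x.2.1]

lemma cosh_le_exp {r : ℝ} (hr : 0 ≤ r) : Real.cosh r ≤ Real.exp r := by
  rw [← Real.cosh_add_sinh]
  exact le_add_of_nonneg_right (Real.sinh_nonneg_iff.2 hr)

/-- The weight `(1 + |log a|)^{3/2}` in the height variable; its reciprocal is integrable for
`da / a`. -/
def heightWeight (a : ℝ) : ℝ := (1 + |Real.log a|) ^ (3 / 2 : ℝ)

/-- The slowly growing weight `(1 + log (1 + |s|))^{1/2}` in the first horizontal variable. -/
def lengthWeight (s : ℝ) : ℝ := √(1 + Real.log (1 + |s|))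

lemma one_le_heightWeight (a : ℝ) : 1 ≤ heightWeight a :=
  Real.one_le_rpow (le_add_of_nonneg_right (abs_nonneg _)) (by norm_num)

lemma log_one_add_abs_nonneg (s : ℝ) : 0 ≤ Real.log (1 + |s|) :=
  Real.log_nonneg (le_add_of_nonneg_right (abs_nonneg s))

lemma one_le_lengthWeight (s : ℝ) : 1 ≤ lengthWeight s :=
  Real.one_le_sqrt.2 (le_add_of_nonneg_right (log_one_add_abs_nonneg s))

lemma heightWeight_le {x : G} (hx : 0 < x.2.2) :
    heightWeight x.2.2 ≤ (1 + rG x) ^ (3 / 2 : ℝ) :=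
  Real.rpow_le_rpow (by positivity) (by linarith [abs_log_le_rG hx]) (by norm_num)

lemma lengthWeight_le {x : G} (hx : 0 < x.2.2) :
    lengthWeight x.1 ≤ √2 * (1 + rG x) ^ (1 / 2 : ℝ) := by
  have hr := rG_nonneg hx
  have hlog : Real.log (1 + |x.1|) ≤ 1 + rG x := by
    calc Real.log (1 + |x.1|) ≤ Real.log (2 * Real.exp (rG x)) := by
          refine Real.log_le_log (by positivity) ?_
          have := cosh_le_exp hr
          rw [cosh_rG hx] at this
          linarith [abs_fst_le_coshArg hx, one_le_coshArg hx]
      _ = Real.log 2 + rG x := by rw [Real.log_mul two_ne_zero (Real.exp_ne_zero _), Real.log_exp]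
      _ ≤ 1 + rG x := by linarith [Real.log_two_lt_d9]
  rw [lengthWeight, ← Real.sqrt_eq_rpow, ← Real.sqrt_mul zero_le_two]
  exact Real.sqrt_le_sqrt (by linarith)

lemma heightWeight_mul_lengthWeight_le {x : G} (hx : 0 < x.2.2) :
    heightWeight x.2.2 * lengthWeight x.1 ≤ 2 * (1 + rG x) ^ 2 := by
  have hr : 0 < 1 + rG x := by linarith [rG_nonneg hx]
  calc heightWeight x.2.2 * lengthWeight x.1
      ≤ (1 + rG x) ^ (3 / 2 : ℝ) * (√2 * (1 + rG x) ^ (1 / 2 : ℝ)) :=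
        mul_le_mul (heightWeight_le hx) (lengthWeight_le hx)
          (zero_le_one.trans (one_le_lengthWeight _)) (by positivity)
    _ = √2 * (1 + rG x) ^ 2 := by
        rw [mul_left_comm, ← Real.rpow_add hr, ← Real.rpow_natCast]
        norm_num
    _ ≤ 2 * (1 + rG x) ^ 2 := by
        gcongr
        exact Real.sqrt_le_iff.2 ⟨by norm_num, by norm_num⟩

/-- The normalizing constant of the heat kernel. -/
def heatConst : ℝ := (8 * Real.pi ^ ((3 : ℝ)/2))⁻¹

/-- The factor `r / sinh r` of the heat kernel, continuously extended to `r = 0`. -/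
def sphericalFactor (r : ℝ) : ℝ := if r = 0 then 1 else r / Real.sinh r

/-- The Gaussian factor `t^{-3/2} exp (-r²/(4t))` of the heat kernel. -/
def gaussianFactor (t r : ℝ) : ℝ := t ^ (-(3 : ℝ)/2) * Real.exp (-(r ^ 2) / (4 * t))

/-- The radial profile of the heat kernel: `p_t(x)` is a constant times `a⁻¹` times the profile
at `r(x)`. -/
def heatProfile (t r : ℝ) : ℝ := sphericalFactor r * gaussianFactor t r

lemma heatConst_pos : 0 < heatConst := by
  unfold heatConst; positivity

lemma heatConst_le_one : heatConst ≤ 1 := by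
  have : 1 ≤ Real.pi ^ ((3 : ℝ)/2) :=
    Real.one_le_rpow (by linarith [Real.pi_gt_three]) (by norm_num)
  exact inv_le_one_of_one_le₀ (by linarith)

lemma heatK_eq_heatProfile (t : ℝ) {x : G} (hx : 0 < x.2.2) :
    heatK t x = heatConst * x.2.2⁻¹ * heatProfile t (rG x) := by
  unfold heatK deltaG heatConst heatProfile sphericalFactor gaussianFactor
  rw [Real.sqrt_inv, Real.sqrt_sq hx.le]
  ring

lemma sphericalFactor_pos {r : ℝ} (hr : 0 ≤ r) : 0 < sphericalFactor r := by
  unfold sphericalFactor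
  split_ifs with h
  · exact one_pos
  · have hr : 0 < r := lt_of_le_of_ne hr (Ne.symm h)
    exact div_pos hr (Real.sinh_pos_iff.2 hr)

lemma convexOn_sinh : ConvexOn ℝ (Ici 0) Real.sinh := by
  refine MonotoneOn.convexOn_of_deriv (convex_Ici 0) Real.continuous_sinh.continuousOn
    Real.differentiable_sinh.differentiableOn ?_
  rw [Real.deriv_sinh, interior_Ici]
  exact Real.cosh_strictMonoOn.monotoneOn.mono Ioi_subset_Ici_self

lemma antitoneOn_sphericalFactor : AntitoneOn sphericalFactor (Ici 0) := by
  intro r hr r' hr' h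
  rcases eq_or_lt_of_le (mem_Ici.1 hr') with rfl | hr'_pos
  · rw [le_antisymm h hr]
  rw [sphericalFactor, if_neg hr'_pos.ne', sphericalFactor]
  split_ifs with h0
  · exact (div_le_one (Real.sinh_pos_iff.2 hr'_pos)).2 (Real.self_le_sinh_iff.2 hr'_pos.le)
  · have hr_pos : 0 < r := lt_of_le_of_ne hr (Ne.symm h0)
    have hslope := convexOn_sinh.secant_mono self_mem_Ici hr hr' h0 hr'_pos.ne' h
    simp only [Real.sinh_zero, sub_zero] at hslope
    rw [← inv_div, ← inv_div (Real.sinh r)]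
    exact inv_anti₀ (div_pos (Real.sinh_pos_iff.2 hr_pos) hr_pos) hslope

lemma gaussianFactor_pos {t : ℝ} (ht : 0 < t) (r : ℝ) : 0 < gaussianFactor t r := by
  unfold gaussianFactor; positivity

lemma strictAntiOn_gaussianFactor {t : ℝ} (ht : 0 < t) :
    StrictAntiOn (gaussianFactor t) (Ici 0) := by
  intro r hr r' _ h
  have hsq : r ^ 2 < r' ^ 2 := pow_lt_pow_left₀ h hr two_ne_zero
  unfold gaussianFactor
  gcongr

lemma strictAntiOn_heatProfile {t : ℝ} (ht : 0 < t) : StrictAntiOn (heatProfile t) (Ici 0) := by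
  intro r hr r' hr' h
  exact mul_lt_mul' (antitoneOn_sphericalFactor hr hr' h.le)
    (strictAntiOn_gaussianFactor ht hr hr' h) (gaussianFactor_pos ht r').le (sphericalFactor_pos hr)

lemma heatProfile_pos {t r : ℝ} (ht : 0 < t) (hr : 0 ≤ r) : 0 < heatProfile t r :=
  mul_pos (sphericalFactor_pos hr) (gaussianFactor_pos ht r)

lemma heatK_nonneg {t : ℝ} (ht : 0 < t) {x : G} (hx : 0 < x.2.2) : 0 ≤ heatK t x := by
  rw [heatK_eq_heatProfile t hx]
  exact mul_nonneg (mul_pos heatConst_pos (inv_pos.2 hx)).le (heatProfile_pos ht (rG_nonneg hx)).le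

lemma heatK_lt_of_coshArg_lt {t : ℝ} (ht : 0 < t) {x y : G} (hx : 0 < x.2.2)
    (hxy : y.2.2 = x.2.2) (h : coshArg x < coshArg y) : heatK t y < heatK t x := by
  have hy : 0 < y.2.2 := hxy ▸ hx
  have hr : rG x < rG y :=
    (Real.arcosh_lt_arcosh (zero_lt_one.trans_le (one_le_coshArg hx))
      (zero_lt_one.trans_le (one_le_coshArg hy))).2 h
  rw [heatK_eq_heatProfile t hx, heatK_eq_heatProfile t hy, hxy]
  exact mul_lt_mul_of_pos_left (strictAntiOn_heatProfile ht (rG_nonneg hx) (rG_nonneg hy) hr)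
    (mul_pos heatConst_pos (inv_pos.2 hx))

lemma rpow_neg_mul_exp_le {p t r : ℝ} (hp : 0 < p) (ht : 0 < t) (hr : 0 < r) :
    t ^ (-p) * Real.exp (-(r ^ 2) / (4 * t)) ≤ (4 * p / r ^ 2) ^ p := by
  set u := r ^ 2 / (4 * t * p) with hu
  have hu_pos : 0 < u := by positivity
  have hle : u ^ p ≤ Real.exp (r ^ 2 / (4 * t)) := by
    calc u ^ p ≤ Real.exp u ^ p := by
          gcongr
          linarith [Real.add_one_le_exp u]
      _ = Real.exp (r ^ 2 / (4 * t)) := by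
          rw [← Real.exp_mul, hu]
          congr 1
          field_simp
  have hsplit : t ^ (-p) = (4 * p / r ^ 2) ^ p * u ^ p := by
    rw [← Real.mul_rpow (by positivity) hu_pos.le, Real.rpow_neg ht.le, ← Real.inv_rpow ht.le, hu]
    congr 1
    field_simp
  rw [hsplit, neg_div, Real.exp_neg, mul_assoc]
  exact mul_le_of_le_one_right (by positivity) (mul_inv_le_one_of_le₀ hle (Real.exp_pos _).le)

lemma rpow_natCast_div_two {b : ℝ} (hb : 0 ≤ b) (n : ℕ) : b ^ ((n : ℝ) / 2) = √b ^ n := by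
  rw [Real.sqrt_eq_rpow, ← Real.rpow_natCast, ← Real.rpow_mul hb]
  congr 1
  ring

lemma rpow_neg_half_mul_exp_le {n : ℕ} (hn : 0 < n) {k t r : ℝ} (hk : 0 ≤ k)
    (hnk : 2 * (n : ℝ) ≤ k ^ 2) (ht : 0 < t) (hr : 0 < r) :
    t ^ (-(n : ℝ) / 2) * Real.exp (-(r ^ 2) / (4 * t)) ≤ (k / r) ^ n := by
  have hn' : (0 : ℝ) < n := Nat.cast_pos.2 hn
  rw [neg_div]
  refine (rpow_neg_mul_exp_le (half_pos hn') ht hr).trans ?_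
  rw [rpow_natCast_div_two (by positivity)]
  refine pow_le_pow_left₀ (Real.sqrt_nonneg _) (Real.sqrt_le_iff.2 ⟨by positivity, ?_⟩) n
  rw [div_pow]
  gcongr
  linarith

lemma gaussianFactor_le {t r : ℝ} (ht : 0 < t) (hr : 0 < r) :
    gaussianFactor t r ≤ (3 / r) ^ 3 := by
  have h := rpow_neg_half_mul_exp_le (n := 3) (k := 3) (by norm_num) (by norm_num) (by norm_num)
    ht hr
  simpa only [gaussianFactor, Nat.cast_ofNat] using h

lemma gaussianFactor_div_le {t r : ℝ} (ht : 0 < t) (hr : 0 < r) :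
    gaussianFactor t r / t ≤ (4 / r) ^ 5 := by
  have h := rpow_neg_half_mul_exp_le (n := 5) (k := 4) (by norm_num) (by norm_num) (by norm_num)
    ht hr
  have ht' : gaussianFactor t r / t = t ^ (-((5 : ℕ) : ℝ) / 2) * Real.exp (-(r ^ 2) / (4 * t)) := by
    rw [gaussianFactor, mul_div_right_comm, ← Real.rpow_sub_one ht.ne']
    norm_num
  rwa [ht']

lemma cosh_le_two_mul_sinh {r : ℝ} (hr : 1 ≤ r) : Real.cosh r ≤ 2 * Real.sinh r := by
  rw [Real.cosh_eq, Real.sinh_eq]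
  have hexp : 2 ≤ Real.exp r := by linarith [Real.add_one_le_exp r]
  have hmul : Real.exp r * Real.exp (-r) = 1 := by
    rw [← Real.exp_add, add_neg_cancel, Real.exp_zero]
  nlinarith [Real.exp_pos (-r)]

lemma inv_sinh_le {r : ℝ} (hr : 1 ≤ r) : (Real.sinh r)⁻¹ ≤ 2 / Real.cosh r := by
  have hs : 0 < Real.sinh r := Real.sinh_pos_iff.2 (by linarith)
  rw [inv_eq_one_div, div_le_div_iff₀ hs (Real.cosh_pos r), one_mul]
  exact cosh_le_two_mul_sinh hr

lemma heatProfile_le {t r : ℝ} (ht : 0 < t) (hr : 1 ≤ r) :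
    heatProfile t r ≤ 54 / (r ^ 2 * Real.cosh r) := by
  have hr0 : 0 < r := by linarith
  calc heatProfile t r = r * (Real.sinh r)⁻¹ * gaussianFactor t r := by
        rw [heatProfile, sphericalFactor, if_neg hr0.ne', div_eq_mul_inv]
    _ ≤ r * (2 / Real.cosh r) * (3 / r) ^ 3 := by
        have := gaussianFactor_le ht hr0
        have := inv_sinh_le hr
        have := (gaussianFactor_pos ht r).le
        gcongr
    _ = 54 / (r ^ 2 * Real.cosh r) := by
        field_simp
        norm_num

lemma heatK_le {t : ℝ} (ht : 0 < t) {x : G} (hx : 0 < x.2.2) (hr : 1 ≤ rG x) :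
    heatK t x ≤ 54 / (x.2.2 * coshArg x * rG x ^ 2) := by
  have hprofile := heatProfile_le ht hr
  have hc := one_le_coshArg hx
  rw [cosh_rG hx] at hprofile
  calc heatK t x ≤ 1 * x.2.2⁻¹ * (54 / (rG x ^ 2 * coshArg x)) := by
        rw [heatK_eq_heatProfile t hx]
        have := (heatProfile_pos ht (rG_nonneg hx)).le
        have := heatConst_le_one
        gcongr
    _ = 54 / (x.2.2 * coshArg x * rG x ^ 2) := by
        field_simp

lemma hasDerivAt_gaussianFactor {t : ℝ} (ht : 0 < t) (r : ℝ) :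
    HasDerivAt (gaussianFactor t) (-(r / 2) * (gaussianFactor t r / t)) r := by
  have h := ((((hasDerivAt_id r).pow 2).neg.div_const (4 * t)).exp).const_mul (t ^ (-(3 : ℝ)/2))
  refine h.congr_deriv ?_
  simp only [id, Pi.neg_apply, Pi.pow_apply, gaussianFactor]
  field_simp
  ring

lemma hasDerivAt_heatProfile {t r : ℝ} (ht : 0 < t) (hr : 0 < r) :
    HasDerivAt (heatProfile t)
      ((Real.sinh r - r * Real.cosh r) / Real.sinh r ^ 2 * gaussianFactor t r +
        r / Real.sinh r * (-(r / 2) * (gaussianFactor t r / t))) r := by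
  have hs : Real.sinh r ≠ 0 := (Real.sinh_pos_iff.2 hr).ne'
  have hquot : HasDerivAt (fun u => u / Real.sinh u)
      ((Real.sinh r - r * Real.cosh r) / Real.sinh r ^ 2) r := by
    have h := (hasDerivAt_id r).div (Real.hasDerivAt_sinh r) hs
    rw [one_mul] at h
    exact h
  refine (hquot.mul (hasDerivAt_gaussianFactor ht r)).congr_of_eventuallyEq ?_
  filter_upwards [eventually_ne_nhds hr.ne'] with u hu
  rw [heatProfile, sphericalFactor, if_neg hu, Pi.mul_apply]

/-- The derivative of `heatProfile t` with respect to `cosh r`. -/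
def heatProfileDeriv (t r : ℝ) : ℝ :=
  ((Real.sinh r - r * Real.cosh r) / Real.sinh r ^ 2 * gaussianFactor t r +
    r / Real.sinh r * (-(r / 2) * (gaussianFactor t r / t))) * (Real.sinh r)⁻¹

lemma hasDerivAt_heatProfile_arcosh {t c : ℝ} (ht : 0 < t) (hc : 1 < c) :
    HasDerivAt (fun c => heatProfile t (Real.arcosh c)) (heatProfileDeriv t (Real.arcosh c)) c := by
  have h := (hasDerivAt_heatProfile ht (Real.arcosh_pos hc)).comp c (Real.hasDerivAt_arcosh hc)
  rwa [← Real.sinh_arcosh hc.le] at h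

lemma abs_heatProfileDeriv_le {t r : ℝ} (ht : 0 < t) (hr : 1 ≤ r) :
    |heatProfileDeriv t r| ≤ 2500 / (r * Real.cosh r) ^ 2 := by
  have hr0 : 0 < r := by linarith
  have hc := Real.cosh_pos r
  have hs : 0 < Real.sinh r := Real.sinh_pos_iff.2 hr0
  have hinv := inv_sinh_le hr
  have hg := gaussianFactor_pos ht r
  have hnumerator : |Real.sinh r - r * Real.cosh r| ≤ 2 * (r * Real.cosh r) := by
    have hsc := Real.sinh_lt_cosh r
    rw [abs_le]
    constructor <;> nlinarith
  calc |heatProfileDeriv t r|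
      ≤ (|Real.sinh r - r * Real.cosh r| * (Real.sinh r)⁻¹ ^ 2 * gaussianFactor t r +
          r * (Real.sinh r)⁻¹ * ((r / 2) * (gaussianFactor t r / t))) * (Real.sinh r)⁻¹ := by
        rw [heatProfileDeriv, abs_mul, abs_of_pos (inv_pos.2 hs)]
        gcongr
        refine (abs_add_le _ _).trans (le_of_eq ?_)
        rw [abs_mul, abs_mul, abs_mul, abs_div, abs_neg, abs_of_pos hg, abs_of_pos (div_pos hg ht),
          abs_of_pos (half_pos hr0), abs_of_pos (div_pos hr0 hs), abs_of_pos (pow_pos hs 2),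
          div_eq_mul_inv, inv_pow, div_eq_mul_inv r]
    _ ≤ (2 * (r * Real.cosh r) * (2 / Real.cosh r) ^ 2 * (3 / r) ^ 3 +
          r * (2 / Real.cosh r) * ((r / 2) * (4 / r) ^ 5)) * (2 / Real.cosh r) := by
        have := gaussianFactor_le ht hr0
        have := gaussianFactor_div_le ht hr0
        gcongr
    _ = (432 + 2048 / r) / (r * Real.cosh r) ^ 2 := by
        field_simp
        ring
    _ ≤ 2500 / (r * Real.cosh r) ^ 2 := by
        gcongr
        have : 2048 / r ≤ 2048 := div_le_self (by norm_num) hr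
        linarith

lemma abs_heatProfile_arcosh_sub_le {t ρ c c' : ℝ} (ht : 0 < t) (hρ : 1 ≤ ρ)
    (hc : Real.cosh ρ ≤ c) (hc' : Real.cosh ρ ≤ c') :
    |heatProfile t (Real.arcosh c') - heatProfile t (Real.arcosh c)| ≤
      2500 / (ρ * Real.cosh ρ) ^ 2 * |c' - c| := by
  have hone : 1 < Real.cosh ρ := Real.one_lt_cosh.2 (by linarith)
  refine (convex_Ici (Real.cosh ρ)).norm_image_sub_le_of_norm_hasDerivWithin_le
    (f := fun c => heatProfile t (Real.arcosh c))
    (fun b hb => (hasDerivAt_heatProfile_arcosh ht (hone.trans_le hb)).hasDerivWithinAt)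
    (fun b hb => ?_) hc hc'
  have hb1 : 1 ≤ b := hone.le.trans hb
  have hρb : ρ ≤ Real.arcosh b := by
    rw [← Real.arcosh_cosh (show 0 ≤ ρ by linarith)]
    exact (Real.arcosh_le_arcosh (Real.cosh_pos ρ) (zero_lt_one.trans_le hb1)).2 hb
  have hderiv := abs_heatProfileDeriv_le ht (hρ.trans hρb)
  rw [Real.cosh_arcosh hb1] at hderiv
  refine hderiv.trans ?_
  have := Real.cosh_pos ρ
  have := Real.arcosh_nonneg hb1
  have : Real.cosh ρ ≤ b := hb
  gcongr

lemma abs_heatK_sub_le {t ρ : ℝ} (ht : 0 < t) {x y : G} (hx : 0 < x.2.2) (hxy : y.2.2 = x.2.2)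
    (hρ : 1 ≤ ρ) (hρx : Real.cosh ρ ≤ coshArg x) (hρy : Real.cosh ρ ≤ coshArg y) :
    |heatK t y - heatK t x| ≤
      2500 / (x.2.2 * (ρ * Real.cosh ρ) ^ 2) * |coshArg y - coshArg x| := by
  have hdiff := abs_heatProfile_arcosh_sub_le ht hρ hρx hρy
  rw [heatK_eq_heatProfile t hx, heatK_eq_heatProfile t (hxy ▸ hx), hxy, ← mul_sub, abs_mul,
    abs_of_pos (mul_pos heatConst_pos (inv_pos.2 hx)), rG_eq_arcosh, rG_eq_arcosh]
  calc _ ≤ 1 * x.2.2⁻¹ * (2500 / (ρ * Real.cosh ρ) ^ 2 * |coshArg y - coshArg x|) := by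
        have := heatConst_le_one
        gcongr
    _ = _ := by
        field_simp

lemma lintegral_radial {f : ℝ → ℝ≥0∞} (hf : Measurable f) :
    ∫⁻ p : ℝ × ℝ, f (p.1 ^ 2 + p.2 ^ 2) =
      ENNReal.ofReal (2 * Real.pi) * ∫⁻ s in Ioi 0, ENNReal.ofReal s * f (s ^ 2) := by
  have hpolar : ∀ p : ℝ × ℝ,
      ENNReal.ofReal p.1 • f ((polarCoord.symm p).1 ^ 2 + (polarCoord.symm p).2 ^ 2) =
        ENNReal.ofReal p.1 * f (p.1 ^ 2) := by
    intro p
    rw [polarCoord_symm_apply, smul_eq_mul]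
    congr 2
    linear_combination p.1 ^ 2 * Real.cos_sq_add_sin_sq p.2
  rw [← lintegral_comp_polarCoord_symm]
  simp only [hpolar, polarCoord_target]
  rw [Measure.volume_eq_prod, ← Measure.prod_restrict, lintegral_prod _ (by fun_prop)]
  simp only [lintegral_const, Measure.restrict_apply_univ, Real.volume_Ioo]
  rw [lintegral_mul_const _ (by fun_prop), mul_comm]
  congr 2
  ring

lemma one_lt_coshArg_of_ne {a s : ℝ} (ha : 0 < a) (hs : s ≠ 0) : 1 < coshArg (s, 0, a) := by
  have h := Real.one_le_cosh (Real.log a)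
  rw [Real.cosh_log ha] at h
  have : 0 < a⁻¹ * s ^ 2 := by positivity
  simp only [coshArg]
  linarith

lemma continuous_coshArg_fst (a : ℝ) : Continuous fun s : ℝ => coshArg (s, 0, a) := by
  dsimp only [coshArg]
  fun_prop

lemma rG_zero_eq_abs_log {a : ℝ} (ha : 0 < a) : rG (0, 0, a) = |Real.log a| := by
  rw [rG_eq_arcosh, ← Real.arcosh_cosh (abs_nonneg (Real.log a)), Real.cosh_abs, Real.cosh_log ha,
    coshArg]
  norm_num

lemma continuous_rG_fst {a : ℝ} (ha : 0 < a) :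
    Continuous fun s : ℝ => rG (s, 0, a) := by
  refine Real.continuousOn_arcosh.comp_continuous (continuous_coshArg_fst a) fun s => ?_
  exact one_le_coshArg ha

lemma hasDerivAt_rG_fst {a s : ℝ} (ha : 0 < a) (hs : s ≠ 0) :
    HasDerivAt (fun s : ℝ => rG (s, 0, a)) (s / a / Real.sinh (rG (s, 0, a))) s := by
  have hcosh : HasDerivAt (fun s : ℝ => coshArg (s, 0, a)) (s / a) s := by
    have h := (((((hasDerivAt_id s).pow 2).add_const ((0 : ℝ) ^ 2)).const_mul a⁻¹).const_add
      (a + a⁻¹)).div_const 2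
    refine h.congr_deriv ?_
    simp only [id, Nat.cast_ofNat, Nat.add_one_sub_one, pow_one]
    field_simp
  have h := (Real.hasDerivAt_arcosh (one_lt_coshArg_of_ne ha hs)).comp s hcosh
  rw [← Real.sinh_arcosh (one_lt_coshArg_of_ne ha hs).le, inv_mul_eq_div] at h
  exact h

lemma tendsto_rG_fst_atTop {a : ℝ} (ha : 0 < a) :
    Tendsto (fun s : ℝ => rG (s, 0, a)) atTop atTop := by
  have hlog : Tendsto (fun s : ℝ => Real.log s) atTop atTop := Real.tendsto_log_atTop
  refine tendsto_atTop_mono' _ ?_ hlog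
  filter_upwards [eventually_gt_atTop 0] with s hs
  have hle : s ≤ Real.cosh (rG (s, 0, a)) := by
    rw [cosh_rG ha]
    exact (le_abs_self s).trans (abs_fst_le_coshArg (x := (s, 0, a)) ha)
  exact (Real.log_le_iff_le_exp hs).2 (hle.trans (cosh_le_exp (rG_nonneg ha)))

lemma lintegral_Ioi_of_hasDerivAt_of_nonneg {g g' : ℝ → ℝ} {b l : ℝ} (hcont : Continuous g)
    (hderiv : ∀ s ∈ Ioi b, HasDerivAt g (g' s) s) (hnonneg : ∀ s ∈ Ioi b, 0 ≤ g' s)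
    (hlim : Tendsto g atTop (nhds l)) :
    ∫⁻ s in Ioi b, ENNReal.ofReal (g' s) = ENNReal.ofReal (l - g b) := by
  rw [← integral_Ioi_of_hasDerivAt_of_nonneg hcont.continuousWithinAt hderiv hnonneg hlim,
    ofReal_integral_eq_lintegral_ofReal
      (integrableOn_Ioi_deriv_of_nonneg hcont.continuousWithinAt hderiv hnonneg hlim)
      (ae_restrict_of_forall_mem measurableSet_Ioi hnonneg)]

lemma tendsto_gaussianFactor_atTop {t : ℝ} (ht : 0 < t) :
    Tendsto (gaussianFactor t) atTop (nhds 0) := by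
  have hpow : Tendsto (fun r : ℝ => (3 / r) ^ 3) atTop (nhds 0) := by
    have h := (tendsto_const_nhds (x := (3 : ℝ))).div_atTop tendsto_id
    simpa using h.pow 3
  refine squeeze_zero' (Eventually.of_forall fun r => (gaussianFactor_pos ht r).le) ?_ hpow
  filter_upwards [eventually_gt_atTop 0] with r hr using gaussianFactor_le ht hr

lemma lintegral_radial_heatProfile {t a : ℝ} (ht : 0 < t) (ha : 0 < a) :
    ∫⁻ s in Ioi 0, ENNReal.ofReal (s * heatProfile t (rG (s, 0, a))) =
      ENNReal.ofReal (2 * a * t * gaussianFactor t (Real.log a)) := by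
  set antideriv : ℝ → ℝ := fun s => -(2 * a * t) * gaussianFactor t (rG (s, 0, a))
  have hcont : Continuous antideriv := by
    have := continuous_rG_fst ha
    unfold antideriv gaussianFactor
    fun_prop
  have hderiv : ∀ s ∈ Ioi (0 : ℝ),
      HasDerivAt antideriv (s * heatProfile t (rG (s, 0, a))) s := by
    intro s hs
    have hr : 0 < rG (s, 0, a) := Real.arcosh_pos (one_lt_coshArg_of_ne ha (ne_of_gt hs))
    refine (((hasDerivAt_gaussianFactor ht _).comp s
      (hasDerivAt_rG_fst ha (ne_of_gt hs))).const_mul _).congr_deriv ?_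
    rw [heatProfile, sphericalFactor, if_neg hr.ne']
    field_simp
  have hlim : Tendsto antideriv atTop (nhds 0) := by
    have h := ((tendsto_gaussianFactor_atTop ht).comp (tendsto_rG_fst_atTop ha)).const_mul
      (-(2 * a * t))
    rwa [mul_zero] at h
  rw [lintegral_Ioi_of_hasDerivAt_of_nonneg hcont hderiv (fun s hs => mul_nonneg (le_of_lt hs)
    (heatProfile_pos ht (rG_nonneg ha)).le) hlim]
  simp only [antideriv, rG_zero_eq_abs_log ha, gaussianFactor, sq_abs, zero_sub, neg_mul, neg_neg]

lemma lintegral_plane_heatK {t a : ℝ} (ht : 0 < t) (ha : 0 < a) :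
    ∫⁻ p : ℝ × ℝ, ENNReal.ofReal (heatK t (p.1, p.2, a)) =
      ENNReal.ofReal (4 * Real.pi * heatConst * t * gaussianFactor t (Real.log a)) := by
  have hradial : ∀ p : ℝ × ℝ, heatK t (p.1, p.2, a) = heatK t (√(p.1 ^ 2 + p.2 ^ 2), 0, a) := by
    intro p
    have : coshArg (p.1, p.2, a) = coshArg (√(p.1 ^ 2 + p.2 ^ 2), 0, a) := by
      simp only [coshArg]
      rw [Real.sq_sqrt (by positivity)]
      ring
    rw [heatK_eq_heatProfile t ha, heatK_eq_heatProfile t ha, rG_eq_arcosh, rG_eq_arcosh, this]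
  have hmeasurable : Measurable fun q : ℝ => ENNReal.ofReal (heatK t (√q, 0, a)) := by
    have := measurable_heatK t
    fun_prop
  have hslice : ∀ s ∈ Ioi (0 : ℝ),
      ENNReal.ofReal s * ENNReal.ofReal (heatK t (√(s ^ 2), 0, a)) =
        ENNReal.ofReal (heatConst * a⁻¹) *
          ENNReal.ofReal (s * heatProfile t (rG (s, 0, a))) := by
    intro s hs
    rw [Real.sqrt_sq (le_of_lt hs), heatK_eq_heatProfile t ha, ← ENNReal.ofReal_mul (le_of_lt hs),
      ← ENNReal.ofReal_mul (mul_pos heatConst_pos (inv_pos.2 ha)).le]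
    congr 1
    ring
  simp only [hradial]
  rw [lintegral_radial hmeasurable, setLIntegral_congr_fun measurableSet_Ioi hslice,
    lintegral_const_mul' _ _ ENNReal.ofReal_ne_top, lintegral_radial_heatProfile ht ha,
    ← ENNReal.ofReal_mul (mul_pos heatConst_pos (inv_pos.2 ha)).le,
    ← ENNReal.ofReal_mul Real.two_pi_pos.le]
  congr 1
  field_simp
  ring

lemma lintegral_gaussianFactor {t : ℝ} (ht : 0 < t) :
    ∫⁻ u, ENNReal.ofReal (4 * Real.pi * heatConst * t * gaussianFactor t u) = 1 := by
  have hgauss : ∀ u : ℝ, Real.exp (-(u ^ 2) / (4 * t)) = Real.exp (-(4 * t)⁻¹ * u ^ 2) := by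
    intro u
    congr 1
    ring
  have hintegrable : Integrable fun u => Real.exp (-(4 * t)⁻¹ * u ^ 2) :=
    integrable_exp_neg_mul_sq (by positivity)
  have hpow : t ^ (-(3 : ℝ) / 2) = (√t ^ 3)⁻¹ := by
    rw [neg_div, Real.rpow_neg ht.le, ← rpow_natCast_div_two ht.le 3, Nat.cast_ofNat]
  have hconst : heatConst = (8 * √Real.pi ^ 3)⁻¹ := by
    rw [heatConst, ← rpow_natCast_div_two Real.pi_pos.le 3, Nat.cast_ofNat]
  have hsqrt : √(Real.pi / (4 * t)⁻¹) = 2 * √Real.pi * √t := by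
    rw [div_inv_eq_mul, show Real.pi * (4 * t) = (2 * √Real.pi * √t) ^ 2 by
      rw [mul_pow, mul_pow, Real.sq_sqrt Real.pi_pos.le, Real.sq_sqrt ht.le]; ring,
      Real.sqrt_sq (by positivity)]
  simp only [gaussianFactor, hgauss, ← mul_assoc]
  rw [← ofReal_integral_eq_lintegral_ofReal (hintegrable.const_mul _)
    (ae_of_all _ fun u => by have := heatConst_pos; positivity),
    integral_const_mul, integral_gaussian, hpow, hconst, hsqrt, ← ENNReal.ofReal_one]
  congr 1
  have := Real.sqrt_pos.2 ht
  have := Real.sqrt_pos.2 Real.pi_pos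
  nth_rewrite 1 [← Real.sq_sqrt Real.pi_pos.le]
  field_simp
  rw [Real.sq_sqrt ht.le]
  ring

theorem lintegral_heatK {t : ℝ} (ht : 0 < t) :
    ∫⁻ x, ENNReal.ofReal (heatK t x) ∂ρG = 1 := by
  have hmeasurable := (measurable_heatK t).ennreal_ofReal
  have hassoc := measurePreserving_prodAssoc (volume : Measure ℝ) (volume : Measure ℝ) haarPos
  have hcomp : Measurable fun z : (ℝ × ℝ) × ℝ =>
      ENNReal.ofReal (heatK t (MeasurableEquiv.prodAssoc z)) :=
    hmeasurable.comp hassoc.measurable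
  have hplane : ∀ a, 0 < a →
      ∫⁻ p, ENNReal.ofReal (heatK t (MeasurableEquiv.prodAssoc (p, a)))
        ∂((volume : Measure ℝ).prod volume) =
          ENNReal.ofReal (4 * Real.pi * heatConst * t * gaussianFactor t (Real.log a)) :=
    fun a ha => lintegral_plane_heatK ht ha
  rw [ρG_eq_prod, ← hassoc.lintegral_comp hmeasurable,
    lintegral_prod_symm' _ hcomp,
    lintegral_congr_ae (ae_haarPos_pos.mono hplane),
    lintegral_haarPos (by unfold gaussianFactor; fun_prop)]
  simp only [Real.log_exp, lintegral_gaussianFactor ht]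

lemma integrable_heatK {t : ℝ} (ht : 0 < t) : Integrable (heatK t) ρG := by
  refine ⟨(measurable_heatK t).aestronglyMeasurable, ?_⟩
  rw [hasFiniteIntegral_iff_ofReal (ae_ρG_pos.mono fun x hx => heatK_nonneg ht hx),
    lintegral_heatK ht]
  exact ENNReal.one_lt_top

lemma convHeat_indicator {S : Set G} (hS : MeasurableSet S) (t : ℝ) {x : G} (hx : 0 < x.2.2) :
    convHeat (S.indicator fun _ => 1) t x = ∫ w in gInv ⁻¹' S, heatK t (gMul w x) ∂ρG := by
  have hright := measurePreserving_gMul_right hx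
  have hmeasurable : Measurable fun y =>
      S.indicator (fun _ => (1 : ℝ)) (gMul x (gInv y)) * heatK t y :=
    ((measurable_const.indicator hS).comp ((measurable_gMul_left x).comp measurable_gInv)).mul
      (measurable_heatK t)
  have hchange : convHeat (S.indicator fun _ => 1) t x = ∫ w,
      S.indicator (fun _ => (1 : ℝ)) (gMul x (gInv (gMul w x))) * heatK t (gMul w x) ∂ρG := by
    have hmap := integral_map (μ := ρG) hright.measurable.aemeasurable
      hmeasurable.aestronglyMeasurable
    rwa [hright.map_eq] at hmap
  rw [hchange, ← integral_indicator (measurable_gInv hS)]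
  refine integral_congr_ae (ae_ρG_pos.mono fun w hw => ?_)
  have hcancel : gMul x (gInv (gMul w x)) = gInv w := by
    rw [gInv_gMul hw hx, ← gMul_assoc]
    ext <;> simp only [gMul, gInv] <;> field_simp <;> ring
  by_cases hwS : gInv w ∈ S
  · simp only [hcancel, indicator_of_mem hwS, indicator_of_mem (mem_preimage.2 hwS), one_mul]
  · simp only [hcancel, indicator_of_notMem hwS, indicator_of_notMem (mt mem_preimage.1 hwS),
      zero_mul]

lemma integrable_convHeat_indicator {S : Set G} (hS : MeasurableSet S) {t : ℝ} (ht : 0 < t)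
    (x : G) :
    Integrable (fun y => S.indicator (fun _ => (1 : ℝ)) (gMul x (gInv y)) * heatK t y) ρG := by
  refine (integrable_heatK ht).bdd_mul (c := 1) ((measurable_const.indicator hS).comp
    ((measurable_gMul_left x).comp measurable_gInv)).aestronglyMeasurable (ae_of_all _ fun y => ?_)
  exact (norm_indicator_le_norm_self _ _).trans (by norm_num)

/-- The convolution `χ_{R₀} ∗ p_t`, written as an integral over `R₀⁻¹` by right invariance. -/
def boxHeat (t : ℝ) (x : G) : ℝ := ∫ w in gInv ⁻¹' R0set, heatK t (gMul w x) ∂ρG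

/-- The left translation by `(-L, 0, 1)`, which carries `R_L` to `R₀`. -/
def shiftFst (L : ℝ) (x : G) : G := (x.1 - L, x.2)

lemma shiftFst_gMul (L : ℝ) (x y : G) : shiftFst L (gMul x y) = gMul (shiftFst L x) y := by
  simp only [shiftFst, gMul, add_sub_right_comm]

lemma shiftFst_mem_R0set {L : ℝ} {z : G} : shiftFst L z ∈ R0set ↔ z ∈ RLset L := by
  simp only [shiftFst, R0set, RLset, mem_prod, mem_Icc]
  refine and_congr_left' (and_congr ?_ ?_) <;> constructor <;> intro h <;> linarith

lemma convHeat_fL {t : ℝ} (ht : 0 < t) (L : ℝ) {x : G} (hx : 0 < x.2.2) :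
    convHeat (fL L) t x = boxHeat t (shiftFst L x) - boxHeat t x := by
  have hshift : ∀ z, (RLset L).indicator (fun _ => (1 : ℝ)) z =
      R0set.indicator (fun _ => 1) (shiftFst L z) := by
    intro z
    classical simp only [indicator_apply, shiftFst_mem_R0set]
  rw [boxHeat, boxHeat, ← convHeat_indicator measurableSet_R0set t hx,
    ← convHeat_indicator measurableSet_R0set t (x := shiftFst L x) hx, convHeat, convHeat, convHeat,
    ← integral_sub (integrable_convHeat_indicator measurableSet_R0set ht _)
      (integrable_convHeat_indicator measurableSet_R0set ht x)]
  refine integral_congr_ae (ae_of_all _ fun y => ?_)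
  simp only [fL, hshift, shiftFst_gMul, sub_mul]

lemma mem_gInv_preimage_R0set {w : G} (hw : w ∈ gInv ⁻¹' R0set) :
    0 < w.2.2 ∧ Real.exp (-1) ≤ w.2.2 ∧ w.2.2 ≤ Real.exp 1 ∧ |w.1| ≤ w.2.2 ∧ |w.2.1| ≤ w.2.2 := by
  obtain ⟨h1, h2, h3⟩ := hw
  simp only [gInv, one_div] at h1 h2 h3
  have hpos : 0 < w.2.2 := inv_pos.1 ((Real.exp_pos _).trans_le h3.1)
  rw [mem_Icc, div_le_iff₀ hpos, le_div_iff₀ hpos] at h1 h2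
  have hlower := inv_anti₀ (inv_pos.2 hpos) h3.2
  have hupper := inv_anti₀ (Real.exp_pos _) h3.1
  rw [inv_inv, ← Real.exp_neg] at hlower hupper
  rw [neg_neg] at hupper
  exact ⟨hpos, hlower, hupper, abs_le.2 ⟨by linarith, by linarith⟩,
    abs_le.2 ⟨by linarith, by linarith⟩⟩

lemma ρG_gInv_preimage_R0set_lt_top : ρG (gInv ⁻¹' R0set) < ⊤ := by
  have hsub : gInv ⁻¹' R0set ⊆ Icc (-Real.exp 1) (Real.exp 1) ×ˢ
      (Icc (-Real.exp 1) (Real.exp 1) ×ˢ Icc (Real.exp (-1)) (Real.exp 1)) := by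
    intro w hw
    obtain ⟨-, hlower, hupper, hfst, hsnd⟩ := mem_gInv_preimage_R0set hw
    exact ⟨abs_le.1 (hfst.trans hupper), abs_le.1 (hsnd.trans hupper), hlower, hupper⟩
  refine (measure_mono hsub).trans_lt ?_
  rw [ρG_prod, haarPos_Icc_exp, Real.volume_Icc]
  finiteness

lemma ρG_gInv_preimage_R0set_pos : 0 < ρG (gInv ⁻¹' R0set) := by
  have hsub : Icc (-Real.exp (-1)) (Real.exp (-1)) ×ˢ
      (Icc (-Real.exp (-1)) (Real.exp (-1)) ×ˢ Icc (Real.exp (-1)) (Real.exp 1)) ⊆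
        gInv ⁻¹' R0set := by
    rintro w ⟨h1, h2, h3⟩
    have hpos : 0 < w.2.2 := (Real.exp_pos _).trans_le h3.1
    simp only [mem_Icc] at h1 h2
    simp only [mem_preimage, R0set, gInv, mem_prod, mem_Icc, div_le_iff₀ hpos, le_div_iff₀ hpos,
      one_div]
    refine ⟨⟨by linarith [h3.1], by linarith [h3.1]⟩, ⟨by linarith [h3.1], by linarith [h3.1]⟩, ?_⟩
    rw [Real.exp_neg]
    refine ⟨inv_anti₀ hpos h3.2, inv_le_of_inv_le₀ (Real.exp_pos 1) ?_⟩
    rw [← Real.exp_neg]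
    exact h3.1
  refine lt_of_lt_of_le ?_ (measure_mono hsub)
  rw [ρG_prod, haarPos_Icc_exp, Real.volume_Icc]
  have := Real.exp_pos (-1)
  simp only [pos_iff_ne_zero, ne_eq, mul_eq_zero, ENNReal.ofReal_eq_zero, not_or, not_le]
  refine ⟨by linarith, by linarith, by norm_num⟩

lemma integrable_heatK_gMul {t : ℝ} (ht : 0 < t) {x : G} (hx : 0 < x.2.2) :
    Integrable (fun w => heatK t (gMul w x)) ρG :=
  (measurePreserving_gMul_right hx).integrable_comp_of_integrable (integrable_heatK ht)

lemma integral_heatK {t : ℝ} (ht : 0 < t) : ∫ x, heatK t x ∂ρG = 1 := by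
  rw [integral_eq_lintegral_of_nonneg_ae (ae_ρG_pos.mono fun x hx => heatK_nonneg ht hx)
    (measurable_heatK t).aestronglyMeasurable, lintegral_heatK ht, ENNReal.toReal_one]

lemma boxHeat_nonneg {t : ℝ} (ht : 0 < t) {x : G} (hx : 0 < x.2.2) : 0 ≤ boxHeat t x :=
  setIntegral_nonneg (measurable_gInv measurableSet_R0set) fun _ hw =>
    heatK_nonneg ht (mul_pos (mem_gInv_preimage_R0set hw).1 hx)

lemma boxHeat_le_one {t : ℝ} (ht : 0 < t) {x : G} (hx : 0 < x.2.2) : boxHeat t x ≤ 1 := by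
  have hright := measurePreserving_gMul_right hx
  calc boxHeat t x ≤ ∫ w, heatK t (gMul w x) ∂ρG :=
        setIntegral_le_integral (integrable_heatK_gMul ht hx)
          (ae_ρG_pos.mono fun w hw => heatK_nonneg ht (mul_pos hw hx))
    _ = 1 := by
        rw [← integral_map hright.measurable.aemeasurable
          (measurable_heatK t).aestronglyMeasurable, hright.map_eq, integral_heatK ht]

lemma coshArg_le_of_mem_gInv_preimage_R0set {w : G} (hw : w ∈ gInv ⁻¹' R0set) :
    coshArg w ≤ 6 := by
  obtain ⟨hpos, hlower, hupper, hfst, hsnd⟩ := mem_gInv_preimage_R0set hw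
  have hexp : Real.exp 1 ≤ 2.75 := by linarith [Real.exp_one_lt_d9]
  have hinv : (w.2.2)⁻¹ ≤ Real.exp 1 := by
    rw [← neg_neg (1 : ℝ), Real.exp_neg]
    exact inv_anti₀ (Real.exp_pos _) hlower
  have hhorizontal : w.2.2⁻¹ * (w.1 ^ 2 + w.2.1 ^ 2) ≤ 2 * w.2.2 := by
    have h1 := sq_le_sq' (abs_le.1 hfst).1 (abs_le.1 hfst).2
    have h2 := sq_le_sq' (abs_le.1 hsnd).1 (abs_le.1 hsnd).2
    calc w.2.2⁻¹ * (w.1 ^ 2 + w.2.1 ^ 2) ≤ w.2.2⁻¹ * (w.2.2 ^ 2 + w.2.2 ^ 2) := by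
          gcongr
      _ = 2 * w.2.2 := by field_simp; ring
  unfold coshArg
  linarith

lemma coshArg_le_coshArg_gMul {w x : G} (hw : w ∈ gInv ⁻¹' R0set) (hx : 0 < x.2.2) :
    coshArg x ≤ 12 * coshArg (gMul w x) := by
  have hwpos := (mem_gInv_preimage_R0set hw).1
  have hle := coshArg_le_of_mem_gInv_preimage_R0set hw
  have hone := one_le_coshArg (x := gMul w x) (mul_pos hwpos hx)
  calc coshArg x ≤ 2 * coshArg w * coshArg (gMul w x) := coshArg_le_of_gMul hwpos hx
    _ ≤ 2 * 6 * coshArg (gMul w x) := by gcongr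
    _ = 12 * coshArg (gMul w x) := by ring

lemma one_third_le_of_mem_gInv_preimage_R0set {w : G} (hw : w ∈ gInv ⁻¹' R0set) :
    1 / 3 ≤ w.2.2 := by
  refine le_trans ?_ (mem_gInv_preimage_R0set hw).2.1
  rw [Real.exp_neg, one_div]
  exact inv_anti₀ (Real.exp_pos 1) (by linarith [Real.exp_one_lt_d9])

lemma forty_eight_le_cosh_five : (48 : ℝ) ≤ Real.cosh 5 := by
  have hexp : (96 : ℝ) ≤ Real.exp 5 := by
    calc (96 : ℝ) ≤ 2.7 ^ 5 := by norm_num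
      _ ≤ Real.exp 1 ^ 5 := by gcongr; linarith [Real.exp_one_gt_d9]
      _ = Real.exp 5 := by rw [← Real.exp_nat_mul]; norm_num
  rw [Real.cosh_eq]
  linarith [Real.exp_pos (-5)]

lemma heatK_gMul_le_of_six_le_rG {t : ℝ} (ht : 0 < t) {w x : G} (hw : w ∈ gInv ⁻¹' R0set)
    (hx : 0 < x.2.2) (hr : 6 ≤ rG x) :
    heatK t (gMul w x) ≤
      400000 / (bracketSq x * (heightWeight x.2.2 * lengthWeight x.1)) := by
  have hwpos := (mem_gInv_preimage_R0set hw).1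
  have hy : 0 < (gMul w x).2.2 := mul_pos hwpos hx
  have hcosh := coshArg_le_coshArg_gMul hw hx
  have hc := one_le_coshArg hy
  have hrle : rG x ≤ rG (gMul w x) + 5 :=
    rG_le_rG_add hx hy (by norm_num)
      (hcosh.trans (by gcongr; linarith [forty_eight_le_cosh_five]))
  have hbracket : bracketSq x ≤ 72 * (gMul w x).2.2 * coshArg (gMul w x) := by
    have hs := one_third_le_of_mem_gInv_preimage_R0set hw
    calc bracketSq x ≤ 2 * x.2.2 * coshArg x := bracketSq_le_mul_coshArg hx
      _ ≤ 2 * (3 * w.2.2 * x.2.2) * (12 * coshArg (gMul w x)) := by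
        have := one_le_coshArg hx
        gcongr
        nlinarith
      _ = 72 * (gMul w x).2.2 * coshArg (gMul w x) := by simp only [gMul]; ring
  have hweight : heightWeight x.2.2 * lengthWeight x.1 ≤ 98 * rG (gMul w x) ^ 2 := by
    calc heightWeight x.2.2 * lengthWeight x.1 ≤ 2 * (1 + rG x) ^ 2 :=
          heightWeight_mul_lengthWeight_le hx
      _ ≤ 2 * (7 * rG (gMul w x)) ^ 2 := by gcongr; linarith
      _ = 98 * rG (gMul w x) ^ 2 := by ring
  have hone := one_le_heightWeight x.2.2
  have hone' := one_le_lengthWeight x.1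
  have hbpos := bracketSq_pos x
  refine (heatK_le ht hy (by linarith)).trans ?_
  have hrpos : 0 < rG (gMul w x) := by linarith
  rw [div_le_div_iff₀ (by positivity) (by positivity)]
  calc 54 * (bracketSq x * (heightWeight x.2.2 * lengthWeight x.1))
      ≤ 54 * (72 * (gMul w x).2.2 * coshArg (gMul w x) * (98 * rG (gMul w x) ^ 2)) := by gcongr
    _ = 381024 * ((gMul w x).2.2 * coshArg (gMul w x) * rG (gMul w x) ^ 2) := by ring
    _ ≤ 400000 * ((gMul w x).2.2 * coshArg (gMul w x) * rG (gMul w x) ^ 2) := by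
        gcongr; norm_num

lemma bracketSq_mul_weight_le {x : G} (hx : 0 < x.2.2) {k : ℝ} (hr : rG x ≤ k) :
    bracketSq x * (heightWeight x.2.2 * lengthWeight x.1) ≤
      Real.exp k ^ 2 * (2 * (1 + k) ^ 2) := by
  have hr0 := rG_nonneg hx
  have hcosh : coshArg x ≤ Real.exp k := by
    rw [← cosh_rG hx]
    exact (cosh_le_exp hr0).trans (Real.exp_le_exp.2 hr)
  have hone := one_le_heightWeight x.2.2
  have hone' := one_le_lengthWeight x.1
  have hc := one_le_coshArg hx
  calc bracketSq x * (heightWeight x.2.2 * lengthWeight x.1)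
      ≤ coshArg x ^ 2 * (2 * (1 + rG x) ^ 2) :=
        mul_le_mul (bracketSq_le_coshArg_sq hx) (heightWeight_mul_lengthWeight_le hx)
          (by positivity) (by positivity)
    _ ≤ Real.exp k ^ 2 * (2 * (1 + k) ^ 2) := by gcongr

lemma exists_boxHeat_le : ∃ C, 0 < C ∧ ∀ {t : ℝ}, 0 < t → ∀ {x : G}, 0 < x.2.2 →
    boxHeat t x ≤ C / (bracketSq x * (heightWeight x.2.2 * lengthWeight x.1)) := by
  set V : ℝ := ρG.real (gInv ⁻¹' R0set)
  refine ⟨400000 * V + Real.exp 6 ^ 2 * (2 * (1 + 6) ^ 2), by positivity, fun {t} ht {x} hx => ?_⟩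
  have hbpos := bracketSq_pos x
  have hone := one_le_heightWeight x.2.2
  have hone' := one_le_lengthWeight x.1
  rcases le_total 6 (rG x) with hr | hr
  · calc boxHeat t x
        ≤ ∫ _ in gInv ⁻¹' R0set,
            400000 / (bracketSq x * (heightWeight x.2.2 * lengthWeight x.1)) ∂ρG :=
          setIntegral_mono_on (integrable_heatK_gMul ht hx).integrableOn
            (integrableOn_const ρG_gInv_preimage_R0set_lt_top.ne)
            (measurable_gInv measurableSet_R0set)
            fun w hw => heatK_gMul_le_of_six_le_rG ht hw hx hr
      _ = 400000 * V / (bracketSq x * (heightWeight x.2.2 * lengthWeight x.1)) := by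
          rw [setIntegral_const, smul_eq_mul]; ring
      _ ≤ _ := by gcongr; exact le_add_of_nonneg_right (by positivity)
  · refine (boxHeat_le_one ht hx).trans ((one_le_div (by positivity)).2 ?_)
    exact (bracketSq_mul_weight_le hx hr).trans (le_add_of_nonneg_left (by positivity))

lemma coshArg_le_coshArg_shiftFst {L : ℝ} {x : G} (hx : 0 < x.2.2) (hL : 2 * |L| ≤ |x.1|) :
    coshArg x ≤ 4 * coshArg (shiftFst L x) := by
  have hsq : x.1 ^ 2 ≤ 4 * (x.1 - L) ^ 2 := by
    have : |x.1| ≤ |2 * (x.1 - L)| := by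
      rw [abs_mul, abs_two]
      linarith [abs_sub_abs_le_abs_sub x.1 L]
    nlinarith [sq_le_sq.2 this]
  rw [coshArg_eq hx, coshArg_eq (x := shiftFst L x) hx, ← mul_div_assoc]
  simp only [shiftFst]
  gcongr
  nlinarith [sq_nonneg x.2.1, sq_nonneg x.2.2]

lemma coshArg_gMul_shiftFst_sub (L : ℝ) {w x : G} (hw : 0 < w.2.2) (hx : 0 < x.2.2) :
    coshArg (gMul w (shiftFst L x)) - coshArg (gMul w x) =
      L * (w.2.2 * L - 2 * w.1 - 2 * w.2.2 * x.1) / (2 * x.2.2) := by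
  simp only [coshArg, gMul, shiftFst]
  field_simp
  ring

lemma abs_coshArg_gMul_shiftFst_sub_le {L : ℝ} (hL : 1 ≤ L) {w x : G}
    (hw : w ∈ gInv ⁻¹' R0set) (hx : 0 < x.2.2) (hLx : 2 * L ≤ |x.1|) :
    |coshArg (gMul w (shiftFst L x)) - coshArg (gMul w x)| ≤ 5 * (L * |x.1|) / x.2.2 := by
  obtain ⟨hwpos, -, hupper, hfst, -⟩ := mem_gInv_preimage_R0set hw
  have hfactor : |w.2.2 * L - 2 * w.1 - 2 * w.2.2 * x.1| ≤ 10 * |x.1| := by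
    calc |w.2.2 * L - 2 * w.1 - 2 * w.2.2 * x.1|
        ≤ |w.2.2 * L| + |2 * w.1| + |2 * w.2.2 * x.1| :=
          (abs_sub _ _).trans (add_le_add_left (abs_sub _ _) _)
      _ = w.2.2 * L + 2 * |w.1| + 2 * w.2.2 * |x.1| := by
          rw [abs_mul, abs_mul 2, abs_mul, abs_mul, abs_two, abs_of_pos hwpos,
            abs_of_pos (zero_lt_one.trans_le hL)]
      _ ≤ w.2.2 * (7 / 2 * |x.1|) := by nlinarith
      _ ≤ 2.75 * (7 / 2 * |x.1|) := by
          gcongr; linarith [Real.exp_one_lt_d9]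
      _ ≤ 10 * |x.1| := by linarith [abs_nonneg x.1]
  rw [coshArg_gMul_shiftFst_sub L hwpos hx, abs_div, abs_mul, abs_of_pos (zero_lt_one.trans_le hL),
    abs_of_pos (by positivity : (0 : ℝ) < 2 * x.2.2), div_le_div_iff₀ (by positivity) hx]
  calc L * |w.2.2 * L - 2 * w.1 - 2 * w.2.2 * x.1| * x.2.2 ≤ L * (10 * |x.1|) * x.2.2 := by gcongr
    _ = 5 * (L * |x.1|) * (2 * x.2.2) := by ring

lemma forty_eight_mul_cosh_le {r : ℝ} (hr : 0 ≤ r) : 48 * Real.cosh r ≤ Real.cosh (r + 5) := by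
  have hcosh := mul_le_mul_of_nonneg_right forty_eight_le_cosh_five (Real.cosh_pos r).le
  have hsinh := mul_nonneg (Real.sinh_nonneg_iff.2 hr)
    (Real.sinh_nonneg_iff.2 (by norm_num : (0 : ℝ) ≤ 5))
  rw [Real.cosh_add]
  linarith

lemma cosh_add_le_exp_mul_cosh (r : ℝ) {k : ℝ} (hk : 0 ≤ k) :
    Real.cosh (r + k) ≤ Real.exp k * Real.cosh r := by
  rw [Real.cosh_add, ← Real.cosh_add_sinh]
  have := mul_le_mul_of_nonneg_right (Real.sinh_lt_cosh r).le (Real.sinh_nonneg_iff.2 hk)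
  linarith

lemma six_le_rG {x : G} (hx : 0 < x.2.2) (h : Real.exp 6 ≤ |x.1|) : 6 ≤ rG x :=
  Real.exp_le_exp.1 <| h.trans <| (abs_fst_le_coshArg hx).trans <| by
    rw [← cosh_rG hx]; exact cosh_le_exp (rG_nonneg hx)

lemma heightWeight_le_sq {x : G} (hx : 0 < x.2.2) : heightWeight x.2.2 ≤ (1 + rG x) ^ 2 := by
  refine (heightWeight_le hx).trans ?_
  rw [← Real.rpow_two]
  exact Real.rpow_le_rpow_of_exponent_le (by linarith [rG_nonneg hx]) (by norm_num)

lemma abs_heatK_gMul_shiftFst_sub_le_of_rG_eq {t L ρ : ℝ} (ht : 0 < t) (hL : 1 ≤ L) {w x : G}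
    (hw : w ∈ gInv ⁻¹' R0set) (hx : 0 < x.2.2) (hLx : 2 * L ≤ |x.1|) (hρ : 1 ≤ ρ)
    (hr : rG x = ρ + 5) :
    |heatK t (gMul w (shiftFst L x)) - heatK t (gMul w x)| ≤
      37500 * L * |x.1| / (x.2.2 * Real.cosh ρ * ρ) ^ 2 := by
  have hlower : 48 * Real.cosh ρ ≤ coshArg x := by
    rw [← cosh_rG hx, hr]
    exact forty_eight_mul_cosh_le (by linarith)
  have hxw := coshArg_le_coshArg_gMul hw hx
  have hshift := coshArg_le_coshArg_gMul hw (x := shiftFst L x) hx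
  have hcmp := coshArg_le_coshArg_shiftFst (L := L) hx
    (by rwa [abs_of_pos (zero_lt_one.trans_le hL)])
  have hcpos := Real.cosh_pos ρ
  have hwpos := (mem_gInv_preimage_R0set hw).1
  have hs := one_third_le_of_mem_gInv_preimage_R0set hw
  calc |heatK t (gMul w (shiftFst L x)) - heatK t (gMul w x)|
      ≤ 2500 / (w.2.2 * x.2.2 * (ρ * Real.cosh ρ) ^ 2) *
          |coshArg (gMul w (shiftFst L x)) - coshArg (gMul w x)| :=
        abs_heatK_sub_le ht (x := gMul w x) (mul_pos hwpos hx) rfl hρ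
          (by linarith) (by linarith)
    _ ≤ 2500 / (1 / 3 * x.2.2 * (ρ * Real.cosh ρ) ^ 2) * (5 * (L * |x.1|) / x.2.2) := by
        gcongr
        exact abs_coshArg_gMul_shiftFst_sub_le hL hw hx hLx
    _ = 37500 * L * |x.1| / (x.2.2 * Real.cosh ρ * ρ) ^ 2 := by
        field_simp
        ring

lemma abs_heatK_gMul_shiftFst_sub_le {t L : ℝ} (ht : 0 < t) (hL : Real.exp 6 ≤ L) {w x : G}
    (hw : w ∈ gInv ⁻¹' R0set) (hx : 0 < x.2.2) (hLx : 2 * L ≤ |x.1|) :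
    |heatK t (gMul w (shiftFst L x)) - heatK t (gMul w x)| ≤
      7350000 * Real.exp 5 ^ 2 * (L / |x.1|) / (bracketSq x * heightWeight x.2.2) := by
  have hL1 : 1 ≤ L := (Real.one_le_exp (by norm_num)).trans hL
  obtain ⟨ρ, hρ⟩ : ∃ ρ, rG x = ρ + 5 := ⟨rG x - 5, by ring⟩
  have hρ1 : 1 ≤ ρ := by linarith [six_le_rG hx (by linarith)]
  have hxpos : 0 < |x.1| := by linarith
  have hbpos := bracketSq_pos x
  have hone := one_le_heightWeight x.2.2
  have hbracket : bracketSq x ≤ 2 * x.2.2 * (Real.exp 5 * Real.cosh ρ) := by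
    refine (bracketSq_le_mul_coshArg hx).trans ?_
    rw [← cosh_rG hx, hρ]
    gcongr
    exact cosh_add_le_exp_mul_cosh ρ (by norm_num)
  have hfst : |x.1| ^ 2 ≤ bracketSq x := by
    rw [sq_abs, bracketSq]
    linarith [sq_nonneg x.2.1]
  have hheight : heightWeight x.2.2 ≤ 49 * ρ ^ 2 := by
    have hsq := heightWeight_le_sq hx
    rw [hρ] at hsq
    nlinarith
  refine (abs_heatK_gMul_shiftFst_sub_le_of_rG_eq ht hL1 hw hx hLx hρ1 hρ).trans ?_
  rw [div_le_div_iff₀ (by positivity) (by positivity), mul_div_assoc',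
    div_mul_eq_mul_div, le_div_iff₀ hxpos]
  calc 37500 * L * |x.1| * (bracketSq x * heightWeight x.2.2) * |x.1|
      = 37500 * L * (|x.1| ^ 2 * bracketSq x * heightWeight x.2.2) := by ring
    _ ≤ 37500 * L * ((2 * x.2.2 * (Real.exp 5 * Real.cosh ρ)) *
          (2 * x.2.2 * (Real.exp 5 * Real.cosh ρ)) * (49 * ρ ^ 2)) := by
        have := hfst.trans hbracket
        gcongr
    _ = 7350000 * Real.exp 5 ^ 2 * L * (x.2.2 * Real.cosh ρ * ρ) ^ 2 := by ring

lemma exists_abs_boxHeat_shiftFst_sub_le : ∃ C, 0 ≤ C ∧ ∀ {t L : ℝ}, 0 < t → Real.exp 6 ≤ L →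
    ∀ {x : G}, 0 < x.2.2 → 2 * L ≤ |x.1| →
      |boxHeat t (shiftFst L x) - boxHeat t x| ≤
        C * (L / |x.1|) / (bracketSq x * heightWeight x.2.2) := by
  refine ⟨7350000 * Real.exp 5 ^ 2 * ρG.real (gInv ⁻¹' R0set), by positivity,
    fun {t L} ht hL {x} hx hLx => ?_⟩
  rw [boxHeat, boxHeat,
    ← integral_sub (integrable_heatK_gMul ht (x := shiftFst L x) hx).integrableOn
      (integrable_heatK_gMul ht hx).integrableOn, ← Real.norm_eq_abs]
  refine (norm_setIntegral_le_of_norm_le_const ρG_gInv_preimage_R0set_lt_top fun w hw =>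
    abs_heatK_gMul_shiftFst_sub_le ht hL hw hx hLx).trans_eq (by ring)

lemma lintegral_inv_sq_add_sq {b : ℝ} (hb : 0 < b) :
    ∫⁻ v : ℝ, ENNReal.ofReal (b ^ 2 + v ^ 2)⁻¹ = ENNReal.ofReal (Real.pi / b) := by
  have hscale : ∀ v : ℝ, (b ^ 2 + v ^ 2)⁻¹ = (b ^ 2)⁻¹ * (1 + (v / b) ^ 2)⁻¹ := by
    intro v
    rw [← mul_inv]
    congr 1
    field_simp
  have hint : Integrable (fun v : ℝ => (b ^ 2)⁻¹ * (1 + (v / b) ^ 2)⁻¹) :=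
    (integrable_inv_one_add_sq.comp_div hb.ne').const_mul _
  simp_rw [hscale]
  rw [← ofReal_integral_eq_lintegral_ofReal hint (ae_of_all _ fun v => by positivity),
    integral_const_mul, Measure.integral_comp_div (fun v : ℝ => (1 + v ^ 2)⁻¹) b,
    integral_univ_inv_one_add_sq, abs_of_pos hb, smul_eq_mul]
  congr 1
  field_simp

lemma measurable_bracketSq : Measurable bracketSq := by
  unfold bracketSq; fun_prop

lemma measurable_heightWeight : Measurable heightWeight := by
  unfold heightWeight; fun_prop

lemma continuous_lengthWeight : Continuous lengthWeight := by
  unfold lengthWeight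
  refine (continuous_const.add (Continuous.log (by fun_prop) fun s => ?_)).sqrt
  positivity

/-- The total mass of the reciprocal of `heightWeight` for the measure `da / a`. -/
def heightMass : ℝ≥0∞ := ∫⁻ a, ENNReal.ofReal (heightWeight a)⁻¹ ∂haarPos

lemma heightMass_lt_top : heightMass < ⊤ := by
  have hint : Integrable fun u : ℝ => (1 + ‖u‖) ^ (-(3 / 2 : ℝ)) :=
    integrable_one_add_norm (by norm_num)
  have hmeasurable : Measurable fun a => ENNReal.ofReal (heightWeight a)⁻¹ :=
    measurable_heightWeight.inv.ennreal_ofReal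
  rw [heightMass, lintegral_haarPos hmeasurable]
  refine (lintegral_congr fun u => ?_).trans_lt hint.lintegral_lt_top
  rw [heightWeight, Real.log_exp, Real.rpow_neg (by positivity), Real.norm_eq_abs]

/-- The kernel `Φ(x₁) (1 + x₁² + x₂²)⁻¹ (1 + |log a|)^{-3/2}`; both bounds for `f_L ∗ p_t`, near
and far from the support of `f_L`, have this form. -/
def decayKernel (Φ : ℝ → ℝ) (x : G) : ℝ := Φ x.1 / (bracketSq x * heightWeight x.2.2)

lemma measurable_decayKernel {Φ : ℝ → ℝ} (hΦ : Measurable Φ) : Measurable (decayKernel Φ) :=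
  (hΦ.comp measurable_fst).div
    (measurable_bracketSq.mul (measurable_heightWeight.comp (measurable_snd.comp measurable_snd)))

lemma decayKernel_nonneg {Φ : ℝ → ℝ} (hΦ : ∀ s, 0 ≤ Φ s) (x : G) : 0 ≤ decayKernel Φ x :=
  div_nonneg (hΦ x.1)
    (mul_nonneg (bracketSq_pos x).le (zero_le_one.trans (one_le_heightWeight x.2.2)))

lemma lintegral_decayKernel {Φ : ℝ → ℝ} (hΦ : Measurable Φ) (hΦ0 : ∀ s, 0 ≤ Φ s) :
    ∫⁻ x, ENNReal.ofReal (decayKernel Φ x) ∂ρG =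
      (∫⁻ s, ENNReal.ofReal (Φ s * (Real.pi / √(1 + s ^ 2)))) * heightMass := by
  have hfibre : ∀ s, ∫⁻ y, ENNReal.ofReal (decayKernel Φ (s, y))
      ∂((volume : Measure ℝ).prod haarPos) =
        ENNReal.ofReal (Φ s * (Real.pi / √(1 + s ^ 2))) * heightMass := by
    intro s
    have hfactor : ∀ y : ℝ × ℝ, ENNReal.ofReal (decayKernel Φ (s, y)) = ENNReal.ofReal (Φ s) *
        (ENNReal.ofReal (√(1 + s ^ 2) ^ 2 + y.1 ^ 2)⁻¹ *
          ENNReal.ofReal (heightWeight y.2)⁻¹) := by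
      intro y
      rw [← ENNReal.ofReal_mul (by positivity), ← ENNReal.ofReal_mul (hΦ0 s), ← mul_inv,
        Real.sq_sqrt (by positivity)]
      rfl
    have hheight : Measurable fun a => ENNReal.ofReal (heightWeight a)⁻¹ :=
      measurable_heightWeight.inv.ennreal_ofReal
    simp_rw [hfactor]
    rw [lintegral_const_mul' _ _ ENNReal.ofReal_ne_top,
      lintegral_prod_mul (f := fun v : ℝ => ENNReal.ofReal (√(1 + s ^ 2) ^ 2 + v ^ 2)⁻¹)
        (by fun_prop) hheight.aemeasurable,
      lintegral_inv_sq_add_sq (by positivity), ENNReal.ofReal_mul (hΦ0 s), mul_assoc, heightMass]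
  rw [ρG_eq_prod, lintegral_prod _ (measurable_decayKernel hΦ).ennreal_ofReal.aemeasurable]
  simp_rw [hfibre]
  exact lintegral_mul_const _ (by fun_prop)

lemma one_add_abs_le_two_mul_sqrt (s : ℝ) : 1 + |s| ≤ 2 * √(1 + s ^ 2) := by
  have h1 : 1 ≤ √(1 + s ^ 2) := Real.one_le_sqrt.2 (by linarith [sq_nonneg s])
  have h2 : |s| ≤ √(1 + s ^ 2) := Real.abs_le_sqrt (by linarith)
  linarith

lemma hasDerivAt_lengthWeight {s : ℝ} (hs : 0 < s) :
    HasDerivAt lengthWeight (((1 + |s|) * lengthWeight s)⁻¹ / 2) s := by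
  have hlog : HasDerivAt (fun s : ℝ => 1 + Real.log (1 + |s|)) ((1 + |s|)⁻¹) s := by
    have h := (((hasDerivAt_abs_pos hs).const_add 1).log (by positivity)).const_add 1
    rwa [one_div] at h
  have hpos : 0 < 1 + Real.log (1 + |s|) := by linarith [log_one_add_abs_nonneg s]
  refine (hlog.sqrt hpos.ne').congr_deriv ?_
  rw [lengthWeight]
  field_simp

lemma continuous_inv_one_add_abs_mul_lengthWeight :
    Continuous fun s => ((1 + |s|) * lengthWeight s)⁻¹ := by
  have := continuous_lengthWeight
  refine Continuous.inv₀ (by fun_prop) fun s => ?_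
  have := one_le_lengthWeight s
  positivity

lemma integral_inv_one_add_abs_mul_lengthWeight {T : ℝ} (hT : 0 ≤ T) :
    ∫ s in (0 : ℝ)..T, ((1 + |s|) * lengthWeight s)⁻¹ = 2 * (lengthWeight T - 1) := by
  have hcont := continuous_inv_one_add_abs_mul_lengthWeight
  have hFTC := intervalIntegral.integral_eq_sub_of_hasDeriv_right_of_le hT
    continuous_lengthWeight.continuousOn
    (fun s hs => (hasDerivAt_lengthWeight hs.1).hasDerivWithinAt)
    ((hcont.div_const 2).intervalIntegrable 0 T)
  rw [intervalIntegral.integral_div] at hFTC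
  have hzero : lengthWeight 0 = 1 := by simp [lengthWeight]
  linarith

lemma lintegral_inv_lengthWeight_mul_sqrt_le {T : ℝ} (hT : 0 ≤ T) :
    ∫⁻ s in Icc (-T) T, ENNReal.ofReal ((lengthWeight s)⁻¹ * (Real.pi / √(1 + s ^ 2))) ≤
      ENNReal.ofReal (8 * Real.pi * lengthWeight T) := by
  have hcont := continuous_inv_one_add_abs_mul_lengthWeight
  have hhalf := integral_inv_one_add_abs_mul_lengthWeight hT
  have hneg := intervalIntegral.integral_comp_neg (a := 0) (b := T)
    fun s => ((1 + |s|) * lengthWeight s)⁻¹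
  have heven : ∀ s, lengthWeight (-s) = lengthWeight s := fun s => by
    rw [lengthWeight, lengthWeight, abs_neg]
  simp only [heven, abs_neg, neg_zero] at hneg
  have hint : ∫ s in (-T)..T, ((1 + |s|) * lengthWeight s)⁻¹ = 4 * (lengthWeight T - 1) := by
    rw [← intervalIntegral.integral_add_adjacent_intervals (b := 0)
      (hcont.intervalIntegrable _ _) (hcont.intervalIntegrable _ _), ← hneg]
    linarith
  have hbound : ∀ s, (lengthWeight s)⁻¹ * (Real.pi / √(1 + s ^ 2)) ≤
      2 * Real.pi * ((1 + |s|) * lengthWeight s)⁻¹ := by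
    intro s
    have := one_le_lengthWeight s
    have hsqrt := one_add_abs_le_two_mul_sqrt s
    calc (lengthWeight s)⁻¹ * (Real.pi / √(1 + s ^ 2))
        ≤ (lengthWeight s)⁻¹ * (Real.pi / ((1 + |s|) / 2)) := by gcongr; linarith
      _ = 2 * Real.pi * ((1 + |s|) * lengthWeight s)⁻¹ := by field_simp
  calc ∫⁻ s in Icc (-T) T, ENNReal.ofReal ((lengthWeight s)⁻¹ * (Real.pi / √(1 + s ^ 2)))
      ≤ ∫⁻ s in Icc (-T) T, ENNReal.ofReal (2 * Real.pi * ((1 + |s|) * lengthWeight s)⁻¹) :=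
        lintegral_mono fun s => ENNReal.ofReal_le_ofReal (hbound s)
    _ = ENNReal.ofReal (∫ s in Icc (-T) T, 2 * Real.pi * ((1 + |s|) * lengthWeight s)⁻¹) := by
        refine (ofReal_integral_eq_lintegral_ofReal
          ((hcont.const_mul _).continuousOn.integrableOn_compact isCompact_Icc)
          (ae_of_all _ fun s => ?_)).symm
        have := one_le_lengthWeight s
        positivity
    _ = ENNReal.ofReal (2 * Real.pi * (4 * (lengthWeight T - 1))) := by
        rw [integral_const_mul, integral_Icc_eq_integral_Ioc,
          ← intervalIntegral.integral_of_le (by linarith), hint]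
    _ ≤ ENNReal.ofReal (8 * Real.pi * lengthWeight T) :=
        ENNReal.ofReal_le_ofReal (by linarith [Real.pi_pos])

/-- The horizontal profile of `f_L ∗ p_t` on the part `|s| ≤ T` of the line. -/
def nearProfile (T : ℝ) : ℝ → ℝ := (Icc (-T) T).indicator fun s => (lengthWeight s)⁻¹

/-- The horizontal profile of `f_L ∗ p_t` far out: it is comparable to `L / |s|` for `|s| ≥ L`, and
cancels the factor `(1 + s²)^{-1/2}` in `lintegral_decayKernel`, leaving a Cauchy density. -/
def farProfile (L s : ℝ) : ℝ := 2 * L * √(1 + s ^ 2) / (L ^ 2 + s ^ 2)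

lemma nearProfile_nonneg (T s : ℝ) : 0 ≤ nearProfile T s :=
  indicator_nonneg (fun s _ => inv_nonneg.2 (zero_le_one.trans (one_le_lengthWeight s))) s

lemma farProfile_nonneg {L : ℝ} (hL : 0 ≤ L) (s : ℝ) : 0 ≤ farProfile L s := by
  unfold farProfile; positivity

lemma measurable_farProfile (L : ℝ) : Measurable (farProfile L) := by
  unfold farProfile; fun_prop

lemma measurable_nearProfile (T : ℝ) : Measurable (nearProfile T) :=
  continuous_lengthWeight.measurable.inv.indicator measurableSet_Icc

lemma lintegral_decayKernel_nearProfile_le {T : ℝ} (hT : 0 ≤ T) :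
    ∫⁻ x, ENNReal.ofReal (decayKernel (nearProfile T) x) ∂ρG ≤
      ENNReal.ofReal (8 * Real.pi * lengthWeight T) * heightMass := by
  rw [lintegral_decayKernel (measurable_nearProfile T) (nearProfile_nonneg T)]
  gcongr
  refine le_trans (le_of_eq ?_) (lintegral_inv_lengthWeight_mul_sqrt_le hT)
  rw [← lintegral_indicator measurableSet_Icc]
  refine lintegral_congr fun s => ?_
  by_cases hs : s ∈ Icc (-T) T
  · rw [nearProfile, indicator_of_mem hs, indicator_of_mem hs]
  · rw [nearProfile, indicator_of_notMem hs, indicator_of_notMem hs, zero_mul, ENNReal.ofReal_zero]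

lemma lintegral_decayKernel_farProfile {L : ℝ} (hL : 0 < L) :
    ∫⁻ x, ENNReal.ofReal (decayKernel (farProfile L) x) ∂ρG =
      ENNReal.ofReal (2 * Real.pi ^ 2) * heightMass := by
  rw [lintegral_decayKernel (measurable_farProfile L) (farProfile_nonneg hL.le)]
  congr 1
  have hcauchy : ∀ s, farProfile L s * (Real.pi / √(1 + s ^ 2)) =
      2 * Real.pi * L * (L ^ 2 + s ^ 2)⁻¹ := by
    intro s
    rw [farProfile]
    field_simp
  simp_rw [hcauchy, ENNReal.ofReal_mul (by positivity : 0 ≤ 2 * Real.pi * L)]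
  rw [lintegral_const_mul' _ _ ENNReal.ofReal_ne_top, lintegral_inv_sq_add_sq hL,
    ← ENNReal.ofReal_mul (by positivity)]
  congr 1
  field_simp

lemma div_abs_le_farProfile {L s : ℝ} (hL : 0 < L) (hs : L ≤ |s|) : L / |s| ≤ farProfile L s := by
  have hspos : 0 < |s| := hL.trans_le hs
  have hsqrt : |s| ≤ √(1 + s ^ 2) := Real.abs_le_sqrt (by linarith)
  rw [farProfile, div_le_div_iff₀ hspos (by positivity), ← sq_abs s]
  rw [← sq_abs s] at hsqrt
  nlinarith [mul_le_mul_of_nonneg_left hsqrt (by positivity : 0 ≤ L * |s|),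
    mul_le_mul hs hs hL.le hspos.le]

lemma exists_boxHeat_le_decayKernel : ∃ C, 0 < C ∧ ∀ {t T : ℝ}, 0 < t → ∀ {x : G}, 0 < x.2.2 →
    |x.1| ≤ T → boxHeat t x ≤ C * decayKernel (nearProfile T) x := by
  obtain ⟨C, hC, hle⟩ := exists_boxHeat_le
  refine ⟨C, hC, fun {t T} ht {x} hx hT => (hle ht hx).trans_eq ?_⟩
  have := one_le_heightWeight x.2.2
  have := one_le_lengthWeight x.1
  have := bracketSq_pos x
  rw [decayKernel, nearProfile, indicator_of_mem (mem_Icc.2 (abs_le.1 hT))]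
  field_simp

lemma exists_abs_convHeat_fL_le : ∃ C, 0 < C ∧ ∀ {t L : ℝ}, 0 < t → Real.exp 6 ≤ L →
    ∀ {x : G}, 0 < x.2.2 → |convHeat (fL L) t x| ≤
      C * (decayKernel (nearProfile (3 * L)) (shiftFst L x) +
        decayKernel (nearProfile (3 * L)) x + decayKernel (farProfile L) x) := by
  obtain ⟨C₁, hC₁, hnear⟩ := exists_boxHeat_le_decayKernel
  obtain ⟨C₂, hC₂, hfar⟩ := exists_abs_boxHeat_shiftFst_sub_le
  refine ⟨C₁ + C₂, by positivity, fun {t L} ht hL {x} hx => ?_⟩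
  have hL0 : 0 < L := (Real.exp_pos 6).trans_le hL
  have hshift0 := decayKernel_nonneg (nearProfile_nonneg (3 * L)) (shiftFst L x)
  have hstay0 := decayKernel_nonneg (nearProfile_nonneg (3 * L)) x
  have hfar0 := decayKernel_nonneg (farProfile_nonneg hL0.le) x
  rw [convHeat_fL ht L hx]
  rcases le_total (2 * L) |x.1| with hx1 | hx1
  · have hbracket := bracketSq_pos x
    have hheight := one_le_heightWeight x.2.2
    calc |boxHeat t (shiftFst L x) - boxHeat t x|
        ≤ C₂ * (L / |x.1|) / (bracketSq x * heightWeight x.2.2) := hfar ht hL hx hx1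
      _ = C₂ * (L / |x.1| / (bracketSq x * heightWeight x.2.2)) := by ring
      _ ≤ C₂ * decayKernel (farProfile L) x := by
          unfold decayKernel
          gcongr
          exact div_abs_le_farProfile hL0 (by linarith)
      _ ≤ (C₁ + C₂) * (decayKernel (nearProfile (3 * L)) (shiftFst L x) +
            decayKernel (nearProfile (3 * L)) x + decayKernel (farProfile L) x) := by
          gcongr <;> linarith
  · have hshift := hnear ht (x := shiftFst L x) (T := 3 * L) hx
      ((abs_sub _ _).trans (by rw [abs_of_pos hL0]; linarith))
    have hstay := hnear ht (T := 3 * L) hx (by linarith)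
    calc |boxHeat t (shiftFst L x) - boxHeat t x|
        ≤ boxHeat t (shiftFst L x) + boxHeat t x := by
          have := boxHeat_nonneg ht (x := shiftFst L x) hx
          have := boxHeat_nonneg ht hx
          exact abs_le.2 ⟨by linarith, by linarith⟩
      _ ≤ C₁ * (decayKernel (nearProfile (3 * L)) (shiftFst L x) +
            decayKernel (nearProfile (3 * L)) x) := by linarith
      _ ≤ (C₁ + C₂) * (decayKernel (nearProfile (3 * L)) (shiftFst L x) +
            decayKernel (nearProfile (3 * L)) x + decayKernel (farProfile L) x) :=
          mul_le_mul (by linarith) (by linarith) (by linarith) (by linarith)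

lemma lengthWeight_three_mul_le {L : ℝ} (hL : Real.exp 6 ≤ L) :
    lengthWeight (3 * L) ≤ 2 * √(Real.log L) := by
  have hL6 : 7 ≤ L := by linarith [Real.add_one_le_exp (6 : ℝ)]
  have hlog : 6 ≤ Real.log L := (Real.le_log_iff_exp_le (by linarith)).2 hL
  have h := Real.log_le_log (by linarith) (by nlinarith : 1 + 3 * L ≤ L ^ 2)
  rw [Real.log_pow] at h
  push_cast at h
  rw [lengthWeight, abs_of_nonneg (by linarith)]
  exact (Real.sqrt_le_iff.2 ⟨by positivity, by
    rw [mul_pow, Real.sq_sqrt (by linarith)]; linarith⟩)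

lemma exists_lintegral_maxHeat_fL_le_decayKernel : ∃ C, 0 < C ∧ ∀ L, Real.exp 6 ≤ L →
    ∫⁻ x, maxHeat (fL L) x ∂ρG ≤ ENNReal.ofReal C *
      (2 * ∫⁻ x, ENNReal.ofReal (decayKernel (nearProfile (3 * L)) x) ∂ρG +
        ∫⁻ x, ENNReal.ofReal (decayKernel (farProfile L) x) ∂ρG) := by
  obtain ⟨C, hC, hpointwise⟩ := exists_abs_convHeat_fL_le
  refine ⟨C, hC, fun L hL => ?_⟩
  have hL0 : 0 < L := (Real.exp_pos 6).trans_le hL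
  set near : G → ℝ≥0∞ := fun x => ENNReal.ofReal (decayKernel (nearProfile (3 * L)) x)
  set far : G → ℝ≥0∞ := fun x => ENNReal.ofReal (decayKernel (farProfile L) x)
  have hnear : Measurable near := (measurable_decayKernel (measurable_nearProfile _)).ennreal_ofReal
  have hfar : Measurable far := (measurable_decayKernel (measurable_farProfile L)).ennreal_ofReal
  have hshift : MeasurePreserving (shiftFst L) ρG ρG := by
    simpa only [neg_add_eq_sub] using! measurePreserving_add_fst (-L)
  have hmax : ∀ᵐ x ∂ρG, maxHeat (fL L) x ≤
      ENNReal.ofReal C * (near (shiftFst L x) + near x + far x) := by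
    filter_upwards [ae_ρG_pos] with x hx
    have hnonneg := decayKernel_nonneg (nearProfile_nonneg (3 * L))
    refine iSup₂_le fun t ht => ?_
    rw [← ENNReal.ofReal_add (hnonneg _) (hnonneg _), ← ENNReal.ofReal_add
      (add_nonneg (hnonneg _) (hnonneg _)) (decayKernel_nonneg (farProfile_nonneg hL0.le) x),
      ← ENNReal.ofReal_mul hC.le]
    exact ENNReal.ofReal_le_ofReal (hpointwise ht hL hx)
  refine (lintegral_mono_ae hmax).trans_eq ?_
  rw [lintegral_const_mul' _ _ ENNReal.ofReal_ne_top, lintegral_add_right _ hfar,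
    lintegral_add_right _ hnear, hshift.lintegral_comp hnear, two_mul]

lemma exists_lintegral_maxHeat_fL_le : ∃ C, 0 < C ∧ ∀ L, Real.exp 6 ≤ L →
    ∫⁻ x, maxHeat (fL L) x ∂ρG ≤ ENNReal.ofReal (C * √(Real.log L)) := by
  obtain ⟨C, hC, hle⟩ := exists_lintegral_maxHeat_fL_le_decayKernel
  obtain ⟨M, hM, hmass⟩ : ∃ M : ℝ, 0 ≤ M ∧ heightMass = ENNReal.ofReal M :=
    ⟨heightMass.toReal, ENNReal.toReal_nonneg, (ENNReal.ofReal_toReal heightMass_lt_top.ne).symm⟩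
  refine ⟨C * ((32 * Real.pi + 2 * Real.pi ^ 2) * (M + 1)), by positivity, fun L hL => ?_⟩
  have hL0 : 0 < L := (Real.exp_pos 6).trans_le hL
  have hlog : 1 ≤ √(Real.log L) := Real.one_le_sqrt.2 <|
    (Real.le_log_iff_exp_le hL0).2 ((Real.exp_le_exp.2 (by norm_num)).trans hL)
  have hweight := zero_le_one.trans (one_le_lengthWeight (3 * L))
  calc ∫⁻ x, maxHeat (fL L) x ∂ρG
      ≤ ENNReal.ofReal C * (2 * (ENNReal.ofReal (8 * Real.pi * lengthWeight (3 * L)) *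
          heightMass) + ENNReal.ofReal (2 * Real.pi ^ 2) * heightMass) := by
        refine (hle L hL).trans ?_
        gcongr
        · exact lintegral_decayKernel_nearProfile_le (by positivity)
        · exact (lintegral_decayKernel_farProfile hL0).le
    _ = ENNReal.ofReal
          (C * ((16 * Real.pi * lengthWeight (3 * L) + 2 * Real.pi ^ 2) * M)) := by
        rw [hmass, ← ENNReal.ofReal_ofNat 2, ← ENNReal.ofReal_mul (by positivity),
          ← ENNReal.ofReal_mul (by positivity), ← ENNReal.ofReal_mul (by positivity),
          ← ENNReal.ofReal_add (by positivity) (by positivity), ← ENNReal.ofReal_mul hC.le]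
        congr 2
        ring
    _ ≤ ENNReal.ofReal (C * ((16 * Real.pi * (2 * √(Real.log L)) +
          2 * Real.pi ^ 2 * √(Real.log L)) * (M + 1))) := by
        have hnear : 16 * Real.pi * lengthWeight (3 * L) ≤ 16 * Real.pi * (2 * √(Real.log L)) :=
          mul_le_mul_of_nonneg_left (lengthWeight_three_mul_le hL) (by positivity)
        have hfar : 2 * Real.pi ^ 2 ≤ 2 * Real.pi ^ 2 * √(Real.log L) :=
          le_mul_of_one_le_right (by positivity) hlog
        exact ENNReal.ofReal_le_ofReal <| mul_le_mul_of_nonneg_left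
          (mul_le_mul (add_le_add hnear hfar) (by linarith) hM (by positivity)) hC.le
    _ = _ := by
        congr 1
        ring

lemma convHeat_fL_neg {t L : ℝ} (ht : 0 < t) (hL : 2 < L) {x : G} (hx : 0 < x.2.2)
    (hfst : x.1 ≤ 0) : convHeat (fL L) t x < 0 := by
  have hlt : ∀ w ∈ gInv ⁻¹' R0set, heatK t (gMul w (shiftFst L x)) < heatK t (gMul w x) := by
    intro w hw
    obtain ⟨hwpos, -, -, hwfst, -⟩ := mem_gInv_preimage_R0set hw
    refine heatK_lt_of_coshArg_lt ht (mul_pos hwpos hx) rfl ?_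
    rw [← sub_pos, coshArg_gMul_shiftFst_sub L hwpos hx]
    have hfactor : 0 < w.2.2 * L - 2 * w.1 - 2 * w.2.2 * x.1 := by
      nlinarith [le_abs_self w.1]
    positivity
  have hmeas : MeasurableSet (gInv ⁻¹' R0set) := measurable_gInv measurableSet_R0set
  have hint := (integrable_heatK_gMul ht hx).integrableOn (s := gInv ⁻¹' R0set)
  have hintShift :=
    (integrable_heatK_gMul ht (x := shiftFst L x) hx).integrableOn (s := gInv ⁻¹' R0set)
  rw [convHeat_fL ht L hx, sub_neg, boxHeat, boxHeat, ← sub_pos, ← integral_sub hint hintShift]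
  refine (setIntegral_pos_iff_support_of_nonneg_ae
    ((ae_restrict_mem hmeas).mono fun w hw => (sub_pos.2 (hlt w hw)).le)
    (hint.sub hintShift)).2 ?_
  exact ρG_gInv_preimage_R0set_pos.trans_le
    (measure_mono fun w hw => ⟨(sub_pos.2 (hlt w hw)).ne', hw⟩)

lemma measurable_fL (L : ℝ) : Measurable (fL L) :=
  (measurable_const.indicator (measurableSet_RLset L)).sub
    (measurable_const.indicator measurableSet_R0set)

lemma measurable_convHeat {f : G → ℝ} (hf : Measurable f) (t : ℝ) : Measurable (convHeat f t) := by
  have hdiv : Measurable fun p : G × G => gMul p.1 (gInv p.2) := by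
    unfold gMul gInv; fun_prop
  have hjoint : Measurable fun p : G × G => f (gMul p.1 (gInv p.2)) * heatK t p.2 :=
    (hf.comp hdiv).mul ((measurable_heatK t).comp measurable_snd)
  exact (hjoint.stronglyMeasurable.integral_prod_right' (ν := ρG)).measurable

lemma lintegral_maxHeat_fL_pos {L : ℝ} (hL : 2 < L) : 0 < ∫⁻ x, maxHeat (fL L) x ∂ρG := by
  refine lt_of_lt_of_le ?_ (lintegral_mono fun x =>
    le_iSup₂ (f := fun (t : ℝ) (_ : 0 < t) => ENNReal.ofReal |convHeat (fL L) t x|) 1 one_pos)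
  have hmeas : Measurable fun x => ENNReal.ofReal |convHeat (fL L) 1 x| :=
    (continuous_abs.measurable.comp (measurable_convHeat (measurable_fL L) 1)).ennreal_ofReal
  rw [lintegral_pos_iff_support hmeas]
  have hbox : 0 < ρG (Icc (-1) 0 ×ˢ (Icc (-1) 0 ×ˢ Icc (Real.exp 0) (Real.exp 1))) := by
    rw [ρG_prod, haarPos_Icc_exp, Real.volume_Icc]
    norm_num
  refine hbox.trans_le (measure_mono fun x hx => ?_)
  have hneg := convHeat_fL_neg one_pos hL ((Real.exp_pos 0).trans_le hx.2.2.1) hx.1.2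
  exact (ENNReal.ofReal_pos.2 (abs_pos.2 hneg.ne)).ne'

lemma exists_prod_eq_of_isCZ {R : Set G} (hR : IsCZ R) : ∃ (a b : ℝ) (S : Set (ℝ × ℝ)),
    a < b ∧ R = Icc a b ×ˢ S ∧ MeasurableSet S ∧
      0 < (volume.prod haarPos) S ∧ (volume.prod haarPos) S < ⊤ := by
  obtain ⟨c, l, r, hc, hl, hr, rfl, -, -⟩ := hR
  refine ⟨c.1 - l / 2, c.1 + l / 2, _, by linarith, rfl,
    measurableSet_Icc.prod measurableSet_Icc, ?_⟩
  have hheight : haarPos (Icc (c.2.2 * Real.exp (-r)) (c.2.2 * Real.exp r)) =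
      ENNReal.ofReal (2 * r) := by
    rw [← Real.exp_log hc, ← Real.exp_add, ← Real.exp_add, haarPos_Icc_exp]
    ring_nf
  rw [Measure.prod_prod, hheight, Real.volume_Icc]
  have hside : 0 < c.2.1 + l / 2 - (c.2.1 - l / 2) := by linarith
  exact ⟨ENNReal.mul_pos (ENNReal.ofReal_pos.2 hside).ne' (ENNReal.ofReal_pos.2 (by linarith)).ne',
    by finiteness⟩

lemma measurableSet_of_isCZ {R : Set G} (hR : IsCZ R) : MeasurableSet R := by
  obtain ⟨a, b, S, -, rfl, hS, -⟩ := exists_prod_eq_of_isCZ hR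
  exact measurableSet_Icc.prod hS

lemma ρG_pos_of_isCZ {R : Set G} (hR : IsCZ R) : 0 < ρG R := by
  obtain ⟨a, b, S, hab, rfl, -, hpos, -⟩ := exists_prod_eq_of_isCZ hR
  rw [ρG_eq_prod, Measure.prod_prod, Real.volume_Icc]
  exact ENNReal.mul_pos (ENNReal.ofReal_pos.2 (sub_pos.2 hab)).ne' hpos.ne'

lemma ρG_lt_top_of_isCZ {R : Set G} (hR : IsCZ R) : ρG R < ⊤ := by
  obtain ⟨a, b, S, -, rfl, -, -, htop⟩ := exists_prod_eq_of_isCZ hR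
  rw [ρG_eq_prod, Measure.prod_prod, Real.volume_Icc]
  exact ENNReal.mul_lt_top ENNReal.ofReal_lt_top htop

lemma ofReal_abs_integral_atom_mul_le {A g : G → ℝ} (hA : IsAtomG A)
    (hint : Integrable (fun x => A x * g x) ρG) :
    ENNReal.ofReal |∫ x, A x * g x ∂ρG| ≤ czBMO g := by
  obtain ⟨hAint, R, hR, hsupp, hbound, hmean⟩ := hA
  have hcenter : ∫ x, A x * g x ∂ρG = ∫ x, A x * (g x - czMean g R) ∂ρG := by
    simp_rw [mul_sub]
    rw [integral_sub hint (hAint.mul_const _), integral_mul_const, hmean, zero_mul, sub_zero]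
  have hpointwise : ∀ᵐ x ∂ρG, ‖A x * (g x - czMean g R)‖ₑ ≤
      R.indicator (fun x => (ρG R)⁻¹ * ENNReal.ofReal |g x - czMean g R|) x := by
    filter_upwards [ae_le_eLpNormEssSup (f := A) (μ := ρG)] with x hx
    by_cases hxR : x ∈ R
    · rw [indicator_of_mem hxR, enorm_mul, Real.enorm_eq_ofReal_abs (g x - _)]
      gcongr
      exact hx.trans hbound
    · simp only [indicator_of_notMem hxR, hsupp x hxR, zero_mul, enorm_zero, le_refl]
  rw [hcenter, ← Real.enorm_eq_ofReal_abs]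
  calc ‖∫ x, A x * (g x - czMean g R) ∂ρG‖ₑ
      ≤ ∫⁻ x, ‖A x * (g x - czMean g R)‖ₑ ∂ρG := enorm_integral_le_lintegral_enorm _
    _ ≤ ∫⁻ x in R, (ρG R)⁻¹ * ENNReal.ofReal |g x - czMean g R| ∂ρG := by
        rw [← lintegral_indicator (measurableSet_of_isCZ hR)]
        exact lintegral_mono_ae hpointwise
    _ = (ρG R)⁻¹ * ∫⁻ x in R, ENNReal.ofReal |g x - czMean g R| ∂ρG :=
        lintegral_const_mul' _ _ (ENNReal.inv_ne_top.2 (ρG_pos_of_isCZ hR).ne')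
    _ ≤ czBMO g := le_iSup₂ (f := fun (R : Set G) (_ : IsCZ R) =>
        (ρG R)⁻¹ * ∫⁻ x in R, ENNReal.ofReal |g x - czMean g R| ∂ρG) R hR

lemma tendsto_integral_mul_of_tendsto_eLpNorm {f g : G → ℝ} {F : ℕ → G → ℝ} {K : ℝ}
    (hf : Integrable f ρG) (hF : ∀ n, Integrable (F n) ρG)
    (hg : AEStronglyMeasurable g ρG) (hgK : ∀ x, |g x| ≤ K)
    (htendsto : Tendsto (fun n => eLpNorm (fun x => f x - F n x) 1 ρG) atTop (nhds 0)) :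
    Tendsto (fun n => ∫ x, F n x * g x ∂ρG) atTop (nhds (∫ x, f x * g x ∂ρG)) := by
  have hmul : ∀ {u : G → ℝ}, Integrable u ρG → Integrable (fun x => u x * g x) ρG :=
    fun hu => hu.mul_bdd hg (ae_of_all _ hgK)
  refine tendsto_integral_of_L1 _ (hmul hf).1 (Eventually.of_forall fun n => hmul (hF n)) ?_
  have hupper : Tendsto (fun n => ENNReal.ofReal K * eLpNorm (fun x => f x - F n x) 1 ρG)
      atTop (nhds 0) := by
    simpa only [mul_zero] using ENNReal.Tendsto.const_mul htendsto (Or.inr ENNReal.ofReal_ne_top)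
  refine tendsto_of_tendsto_of_tendsto_of_le_of_le tendsto_const_nhds hupper
    (fun n => zero_le) fun n => ?_
  rw [eLpNorm_one_eq_lintegral_enorm, ← lintegral_const_mul' _ _ ENNReal.ofReal_ne_top]
  refine lintegral_mono fun x => ?_
  rw [← sub_mul, enorm_mul, mul_comm, enorm_sub_rev, Real.enorm_eq_ofReal_abs (g x)]
  gcongr
  exact hgK x

lemma abs_integral_mul_le_of_isH1Decomp {f g : G → ℝ} {lam : ℕ → ℝ} {A : ℕ → G → ℝ} {K B : ℝ}
    (hdecomp : IsH1Decomp f lam A) (hf : Integrable f ρG) (hg : AEStronglyMeasurable g ρG)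
    (hgK : ∀ x, |g x| ≤ K) (hB : 0 ≤ B) (hBMO : czBMO g ≤ ENNReal.ofReal B) :
    |∫ x, f x * g x ∂ρG| ≤ B * ∑' j, |lam j| := by
  obtain ⟨hatom, hsum, htendsto⟩ := hdecomp
  have hmul : ∀ j, Integrable (fun x => A j x * g x) ρG :=
    fun j => (hatom j).1.mul_bdd hg (ae_of_all _ hgK)
  have hterm : ∀ j, |∫ x, A j x * g x ∂ρG| ≤ B := fun j => (ENNReal.ofReal_le_ofReal_iff hB).1
    ((ofReal_abs_integral_atom_mul_le (hatom j) (hmul j)).trans hBMO)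
  have hpartial : ∀ N, ∫ x, (∑ j ∈ Finset.range N, lam j * A j x) * g x ∂ρG =
      ∑ j ∈ Finset.range N, lam j * ∫ x, A j x * g x ∂ρG := by
    intro N
    simp_rw [Finset.sum_mul, mul_assoc]
    rw [integral_finsetSum _ fun j _ => (hmul j).const_mul _]
    simp_rw [integral_const_mul]
  refine le_of_tendsto' (tendsto_integral_mul_of_tendsto_eLpNorm hf
    (fun N => integrable_finsetSum _ fun j _ => (hatom j).1.const_mul _) hg hgK htendsto).abs
    fun N => ?_
  calc |∫ x, (∑ j ∈ Finset.range N, lam j * A j x) * g x ∂ρG|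
      ≤ ∑ j ∈ Finset.range N, |lam j * ∫ x, A j x * g x ∂ρG| := by
        rw [hpartial]
        exact Finset.abs_sum_le_sum_abs _ _
    _ ≤ ∑ j ∈ Finset.range N, B * |lam j| := by
        refine Finset.sum_le_sum fun j _ => ?_
        rw [abs_mul, mul_comm]
        exact mul_le_mul_of_nonneg_right (hterm j) (abs_nonneg _)
    _ = B * ∑ j ∈ Finset.range N, |lam j| := (Finset.mul_sum _ _ _).symm
    _ ≤ B * ∑' j, |lam j| :=
        mul_le_mul_of_nonneg_left (hsum.sum_le_tsum _ fun j _ => abs_nonneg _) hB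

lemma czMean_fst {h : ℝ → ℝ} {a b : ℝ} (hab : a < b) {S : Set (ℝ × ℝ)}
    (hpos : 0 < (volume.prod haarPos) S) (htop : (volume.prod haarPos) S < ⊤) :
    czMean (fun x => h x.1) (Icc a b ×ˢ S) = (∫ s in Icc a b, h s) / (b - a) := by
  have hS := (ENNReal.toReal_pos hpos.ne' htop.ne).ne'
  have hnum : ∫ x in Icc a b ×ˢ S, h x.1 ∂ρG =
      (∫ s in Icc a b, h s) * ((volume.prod haarPos) S).toReal := by
    have hprod := setIntegral_prod_mul (μ := volume) (ν := volume.prod haarPos) h (fun _ => (1 : ℝ))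
      (Icc a b) S
    simpa only [mul_one, ← ρG_eq_prod, setIntegral_const, smul_eq_mul] using! hprod
  rw [czMean, hnum, ρG_eq_prod, Measure.prod_prod, Real.volume_Icc, ENNReal.toReal_mul,
    ENNReal.toReal_ofReal (sub_pos.2 hab).le, mul_div_mul_right _ _ hS]

lemma czBMO_fst_le {h : ℝ → ℝ} (hh : Measurable h) : czBMO (fun x => h x.1) ≤ lineBMO h := by
  refine iSup₂_le fun R hR => ?_
  obtain ⟨a, b, S, hab, rfl, -, hpos, htop⟩ := exists_prod_eq_of_isCZ hR
  set ν : Measure (ℝ × ℝ) := volume.prod haarPos with hν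
  set osc : ℝ → ℝ≥0∞ := fun s => ENNReal.ofReal |h s - (∫ u in Icc a b, h u) / (b - a)|
  have hosc : Measurable osc := by fun_prop
  have hfubini : ∫⁻ x in Icc a b ×ˢ S, osc x.1 ∂ρG = (∫⁻ s in Icc a b, osc s) * ν S := by
    have hprod := lintegral_prod_mul (μ := volume.restrict (Icc a b)) (ν := ν.restrict S)
      hosc.aemeasurable (aemeasurable_const (b := (1 : ℝ≥0∞)))
    simpa only [mul_one, setLIntegral_one, Measure.prod_restrict, hν, ← ρG_eq_prod] using! hprod
  rw [czMean_fst hab hpos htop, hfubini, ρG_eq_prod, Measure.prod_prod, Real.volume_Icc]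
  calc (ENNReal.ofReal (b - a) * ν S)⁻¹ * ((∫⁻ s in Icc a b, osc s) * ν S)
      = (ENNReal.ofReal (b - a))⁻¹ * ∫⁻ s in Icc a b, osc s := by
        rw [ENNReal.mul_inv (Or.inr htop.ne) (Or.inr hpos.ne'), mul_mul_mul_comm,
          ENNReal.inv_mul_cancel hpos.ne' htop.ne, mul_one]
    _ ≤ lineBMO h := le_iSup₂_of_le a b (le_iSup_of_le hab le_rfl)

lemma ofReal_abs_average_sub_le {h : ℝ → ℝ} {a b c : ℝ} (hab : a < b)
    (hint : IntegrableOn h (Icc a b)) :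
    ENNReal.ofReal (b - a) * ENNReal.ofReal |c - (∫ u in Icc a b, h u) / (b - a)| ≤
      ∫⁻ s in Icc a b, ENNReal.ofReal |h s - c| := by
  have hpos : 0 < b - a := sub_pos.2 hab
  have haverage : (b - a) * (c - (∫ u in Icc a b, h u) / (b - a)) =
      ∫ s in Icc a b, (c - h s) := by
    rw [integral_sub (integrable_const c) hint, setIntegral_const, Measure.real, Real.volume_Icc,
      ENNReal.toReal_ofReal hpos.le, smul_eq_mul]
    field_simp
  rw [← ENNReal.ofReal_mul hpos.le, ← abs_of_pos hpos, ← abs_mul, abs_of_pos hpos, haverage,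
    ← Real.enorm_eq_ofReal_abs]
  refine (enorm_integral_le_lintegral_enorm _).trans_eq (lintegral_congr fun s => ?_)
  rw [enorm_sub_rev, Real.enorm_eq_ofReal_abs]

lemma lineBMO_le_two_mul {h : ℝ → ℝ} (hint : ∀ a b, IntegrableOn h (Icc a b)) {B : ℝ≥0∞}
    (hosc : ∀ a b, a < b → ∃ c, ∫⁻ s in Icc a b, ENNReal.ofReal |h s - c| ≤
      B * ENNReal.ofReal (b - a)) : lineBMO h ≤ 2 * B := by
  refine iSup₂_le fun a b => iSup_le fun hab => ?_
  obtain ⟨c, hc⟩ := hosc a b hab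
  set m := (∫ u in Icc a b, h u) / (b - a)
  have htriangle : ∀ s, ENNReal.ofReal |h s - m| ≤
      ENNReal.ofReal |h s - c| + ENNReal.ofReal |c - m| := fun s => by
    rw [← ENNReal.ofReal_add (abs_nonneg _) (abs_nonneg _)]
    exact ENNReal.ofReal_le_ofReal (abs_sub_le _ _ _)
  have hlength := ENNReal.ofReal_pos.2 (sub_pos.2 hab)
  calc (ENNReal.ofReal (b - a))⁻¹ * ∫⁻ s in Icc a b, ENNReal.ofReal |h s - m|
      ≤ (ENNReal.ofReal (b - a))⁻¹ * ((∫⁻ s in Icc a b, ENNReal.ofReal |h s - c|) +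
          ENNReal.ofReal (b - a) * ENNReal.ofReal |c - m|) := by
        gcongr
        refine (lintegral_mono htriangle).trans_eq ?_
        rw [lintegral_add_right _ measurable_const, setLIntegral_const, Real.volume_Icc, mul_comm]
    _ ≤ (ENNReal.ofReal (b - a))⁻¹ *
          (B * ENNReal.ofReal (b - a) + B * ENNReal.ofReal (b - a)) := by
        exact mul_le_mul_right
          (add_le_add hc ((ofReal_abs_average_sub_le hab (hint a b)).trans hc)) _
    _ = 2 * B := by
        rw [← two_mul, ← mul_assoc, mul_comm, mul_assoc,
          ENNReal.mul_inv_cancel_left hlength.ne' ENNReal.ofReal_ne_top, mul_comm]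

lemma continuous_log_one_add_abs : Continuous fun s : ℝ => Real.log (1 + |s|) :=
  Continuous.log (by fun_prop) fun s => by positivity

lemma integral_log_sub_log_le {m : ℝ} (hm : 0 ≤ m) :
    ∫ s in (0 : ℝ)..m, (Real.log (1 + m) - Real.log (1 + |s|)) ≤ m := by
  have hlog : ∫ s in (0 : ℝ)..m, Real.log (1 + |s|) = (1 + m) * Real.log (1 + m) - m := by
    have habs : EqOn (fun s : ℝ => Real.log (1 + |s|)) (fun s => Real.log (1 + s)) (uIcc 0 m) := by
      intro s hs
      rw [uIcc_of_le hm] at hs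
      simp only [abs_of_nonneg hs.1]
    rw [intervalIntegral.integral_congr habs,
      intervalIntegral.integral_comp_add_left (fun s => Real.log s), integral_log, add_zero,
      Real.log_one]
    ring
  rw [intervalIntegral.integral_sub intervalIntegrable_const
    (continuous_log_one_add_abs.intervalIntegrable _ _), hlog, intervalIntegral.integral_const,
    sub_zero, smul_eq_mul]
  linarith [Real.log_nonneg (x := 1 + m) (by linarith)]

lemma lintegral_abs_log_sub_log_le {m : ℝ} (hm : 0 ≤ m) :
    ∫⁻ s in Icc (-m) m, ENNReal.ofReal |Real.log (1 + |s|) - Real.log (1 + m)| ≤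
      ENNReal.ofReal (2 * m) := by
  set gap : ℝ → ℝ := fun s => Real.log (1 + m) - Real.log (1 + |s|)
  have hgap : Continuous gap := continuous_const.sub continuous_log_one_add_abs
  have hnonneg : ∀ s ∈ Icc (-m) m, 0 ≤ gap s := fun s hs =>
    sub_nonneg.2 (Real.log_le_log (by positivity) (by linarith [abs_le.2 hs]))
  have habs : ∫⁻ s in Icc (-m) m, ENNReal.ofReal |Real.log (1 + |s|) - Real.log (1 + m)| =
      ∫⁻ s in Icc (-m) m, ENNReal.ofReal (gap s) :=
    setLIntegral_congr_fun measurableSet_Icc fun s hs => by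
      rw [abs_sub_comm, abs_of_nonneg (hnonneg s hs)]
  have hreflect : ∫ s in -m..0, gap s = ∫ s in 0..m, gap s := by
    simpa only [gap, abs_neg, neg_zero] using
      (intervalIntegral.integral_comp_neg (a := 0) (b := m) gap).symm
  rw [habs, ← ofReal_integral_eq_lintegral_ofReal
    (hgap.continuousOn.integrableOn_compact isCompact_Icc)
    ((ae_restrict_mem measurableSet_Icc).mono hnonneg),
    integral_Icc_eq_integral_Ioc, ← intervalIntegral.integral_of_le (by linarith),
    ← intervalIntegral.integral_add_adjacent_intervals
      (hgap.intervalIntegrable _ 0) (hgap.intervalIntegrable 0 _), hreflect, ← two_mul]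
  exact ENNReal.ofReal_le_ofReal (by linarith [integral_log_sub_log_le hm])

lemma exists_lintegral_abs_log_sub_le (a b : ℝ) : ∃ c : ℝ,
    ∫⁻ s in Icc a b, ENNReal.ofReal |Real.log (1 + |s|) - c| ≤
      4 * ENNReal.ofReal (b - a) := by
  set m := max |a| |b| with hm
  have hm0 : 0 ≤ m := (abs_nonneg a).trans (le_max_left _ _)
  have hupper : ∀ s ∈ Icc a b, |s| ≤ m := fun s hs => abs_le_max_abs_abs hs.1 hs.2
  have hlower : ∀ s ∈ Icc a b, m - (b - a) ≤ |s| := by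
    intro s hs
    rw [sub_le_iff_le_add, hm, max_le_iff]
    constructor
    · linarith [abs_sub_abs_le_abs_sub a s, abs_of_nonpos (sub_nonpos.2 hs.1), hs.2]
    · linarith [abs_sub_abs_le_abs_sub b s, abs_of_nonneg (sub_nonneg.2 hs.2), hs.1]
  refine ⟨Real.log (1 + m), ?_⟩
  rcases le_total (2 * (b - a)) m with hfar | hnear
  · have hosc : ∀ s ∈ Icc a b,
        ENNReal.ofReal |Real.log (1 + |s|) - Real.log (1 + m)| ≤ 1 := by
      intro s hs
      have hle : Real.log (1 + |s|) ≤ Real.log (1 + m) :=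
        Real.log_le_log (by positivity) (by linarith [hupper s hs])
      have hge : Real.log (1 + m) ≤ Real.log 2 + Real.log (1 + |s|) := by
        rw [← Real.log_mul two_ne_zero (by positivity)]
        exact Real.log_le_log (by positivity) (by linarith [hlower s hs])
      rw [ENNReal.ofReal_le_one, abs_le]
      constructor <;> linarith [Real.log_two_lt_d9]
    calc ∫⁻ s in Icc a b, ENNReal.ofReal |Real.log (1 + |s|) - Real.log (1 + m)|
        ≤ ∫⁻ _ in Icc a b, 1 := setLIntegral_mono measurable_const hosc
      _ = 1 * ENNReal.ofReal (b - a) := by rw [setLIntegral_one, Real.volume_Icc, one_mul]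
      _ ≤ 4 * ENNReal.ofReal (b - a) := by gcongr; norm_num
  · calc ∫⁻ s in Icc a b, ENNReal.ofReal |Real.log (1 + |s|) - Real.log (1 + m)|
        ≤ ∫⁻ s in Icc (-m) m, ENNReal.ofReal |Real.log (1 + |s|) - Real.log (1 + m)| :=
          lintegral_mono_set fun s hs => abs_le.1 (hupper s hs)
      _ ≤ ENNReal.ofReal (2 * m) := lintegral_abs_log_sub_log_le hm0
      _ ≤ ENNReal.ofReal (4 * (b - a)) := ENNReal.ofReal_le_ofReal (by linarith)
      _ = 4 * ENNReal.ofReal (b - a) := by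
          rw [ENNReal.ofReal_mul (by norm_num), ENNReal.ofReal_ofNat]

/-- The function `log (1 + |s|)` truncated at height `log (1 + L)`: a bounded function whose
BMO norm does not depend on `L`. -/
def truncatedLog (L s : ℝ) : ℝ := min (Real.log (1 + |s|)) (Real.log (1 + L))

lemma continuous_truncatedLog (L : ℝ) : Continuous (truncatedLog L) :=
  continuous_log_one_add_abs.min continuous_const

lemma abs_truncatedLog_le {L : ℝ} (hL : 0 ≤ L) (s : ℝ) :
    |truncatedLog L s| ≤ Real.log (1 + L) := by
  have hlog : 0 ≤ Real.log (1 + L) := Real.log_nonneg (by linarith)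
  rw [truncatedLog, abs_of_nonneg (le_min (log_one_add_abs_nonneg s) hlog)]
  exact min_le_right _ _

lemma lineBMO_truncatedLog_le (L : ℝ) : lineBMO (truncatedLog L) ≤ ENNReal.ofReal 8 := by
  rw [show ENNReal.ofReal 8 = 2 * 4 by rw [ENNReal.ofReal_ofNat]; norm_num]
  refine lineBMO_le_two_mul
    (fun a b => (continuous_truncatedLog L).continuousOn.integrableOn_compact isCompact_Icc)
    fun a b _ => ?_
  obtain ⟨c, hc⟩ := exists_lintegral_abs_log_sub_le a b
  refine ⟨min c (Real.log (1 + L)), (lintegral_mono fun s => ENNReal.ofReal_le_ofReal ?_).trans hc⟩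
  simpa only [truncatedLog, sub_self, abs_zero, abs_nonneg, sup_of_le_left] using
    abs_min_sub_min_le_max (Real.log (1 + |s|)) (Real.log (1 + L)) c (Real.log (1 + L))

lemma isH1Decomp_single {A : G → ℝ} (hA : IsAtomG A) (c : ℝ) :
    IsH1Decomp (fun x => c * A x) (Pi.single 0 c) (fun _ => A) := by
  refine ⟨fun _ => hA, summable_of_ne_finset_zero (s := {0}) fun j hj => ?_, ?_⟩
  · rw [Pi.single_eq_of_ne (by simpa only [Finset.mem_singleton] using hj), abs_zero]
  · refine tendsto_const_nhds.congr' ?_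
    filter_upwards [eventually_ge_atTop 1] with N hN
    have hsum : ∑ j ∈ Finset.range N, (Pi.single 0 c : ℕ → ℝ) j = c := by
      rw [Finset.sum_pi_single', if_pos (Finset.mem_range.2 hN)]
    simp only [← Finset.sum_mul, hsum, sub_self, eLpNorm_zero']

lemma isAtomG_inv_mul {f : G → ℝ} {R : Set G} (hR : IsCZ R) (hf : Integrable f ρG)
    (hsupp : ∀ x ∉ R, f x = 0) (hbound : ∀ x, |f x| ≤ 1) (hmean : ∫ x, f x ∂ρG = 0) :
    IsAtomG fun x => (ρG R).toReal⁻¹ * f x := by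
  have hpos : 0 < (ρG R).toReal :=
    ENNReal.toReal_pos (ρG_pos_of_isCZ hR).ne' (ρG_lt_top_of_isCZ hR).ne
  refine ⟨hf.const_mul _, R, hR, fun x hx => mul_eq_zero_of_right _ (hsupp x hx), ?_,
    by rw [integral_const_mul, hmean, mul_zero]⟩
  have hinv : (ρG R)⁻¹ = ENNReal.ofReal (ρG R).toReal⁻¹ := by
    rw [ENNReal.ofReal_inv_of_pos hpos, ENNReal.ofReal_toReal (ρG_lt_top_of_isCZ hR).ne]
  rw [eLpNorm_exponent_top, hinv]
  refine eLpNormEssSup_le_of_ae_bound (ae_of_all _ fun x => ?_)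
  rw [norm_mul, Real.norm_of_nonneg (inv_pos.2 hpos).le]
  exact mul_le_of_le_one_right (inv_pos.2 hpos).le (hbound x)

lemma memH1_of_bounded {f : G → ℝ} {R : Set G} (hR : IsCZ R) (hf : Integrable f ρG)
    (hsupp : ∀ x ∉ R, f x = 0) (hbound : ∀ x, |f x| ≤ 1) (hmean : ∫ x, f x ∂ρG = 0) :
    MemH1 f := by
  have hpos : 0 < (ρG R).toReal :=
    ENNReal.toReal_pos (ρG_pos_of_isCZ hR).ne' (ρG_lt_top_of_isCZ hR).ne
  have hdecomp := isH1Decomp_single (isAtomG_inv_mul hR hf hsupp hbound hmean) (ρG R).toReal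
  simp only [mul_inv_cancel_left₀ hpos.ne'] at hdecomp
  exact ⟨hf, _, _, hdecomp⟩

lemma exists_isCZ_subset {L : ℝ} (hL : 2 < L) : ∃ R, IsCZ R ∧ RLset L ⊆ R ∧ R0set ⊆ R := by
  have hexp : L + 3 ≤ Real.exp (2 * L) := by linarith [Real.add_one_le_exp (2 * L)]
  have hlow : Real.exp (-L) ≤ Real.exp (-1) := Real.exp_le_exp.2 (by linarith)
  have hhigh : Real.exp 1 ≤ Real.exp L := Real.exp_le_exp.2 (by linarith)
  refine ⟨_, ⟨(L / 2, 0, 1), Real.exp (2 * L), L, one_pos, Real.exp_pos _, by linarith, rfl,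
    fun h => by linarith, fun _ => ?_⟩, ?_, ?_⟩
  · simp only [one_mul, le_refl, true_and]
    exact Real.exp_lt_exp.2 (by linarith)
  all_goals
    simp only [RLset, R0set, one_mul]
    refine prod_mono (Icc_subset_Icc ?_ ?_)
      (prod_mono (Icc_subset_Icc ?_ ?_) (Icc_subset_Icc hlow hhigh)) <;> linarith

lemma ρG_RLset (L : ℝ) : ρG (RLset L) = ρG R0set := by
  rw [RLset, R0set, ρG_prod, ρG_prod, Real.volume_Icc, Real.volume_Icc]
  ring_nf

lemma ρG_R0set : ρG R0set = ENNReal.ofReal 8 := by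
  rw [R0set, ρG_prod, haarPos_Icc_exp, Real.volume_Icc, ← ENNReal.ofReal_mul (by norm_num),
    ← ENNReal.ofReal_mul (by norm_num)]
  norm_num

lemma integrable_indicator_R0set (c : ℝ) : Integrable (R0set.indicator fun _ => c) ρG :=
  (integrable_indicator_iff measurableSet_R0set).2
    (integrableOn_const (by rw [ρG_R0set]; exact ENNReal.ofReal_ne_top))

lemma integrable_indicator_RLset (L c : ℝ) : Integrable ((RLset L).indicator fun _ => c) ρG :=
  (integrable_indicator_iff (measurableSet_RLset L)).2
    (integrableOn_const (by rw [ρG_RLset, ρG_R0set]; exact ENNReal.ofReal_ne_top))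

lemma integral_indicator_RLset_sub (L c d : ℝ) :
    ∫ x, ((RLset L).indicator (fun _ => c) x - R0set.indicator (fun _ => d) x) ∂ρG =
      8 * (c - d) := by
  rw [integral_sub (integrable_indicator_RLset L c) (integrable_indicator_R0set d),
    integral_indicator_const _ (measurableSet_RLset L), integral_indicator_const _
    measurableSet_R0set, Measure.real, Measure.real, ρG_RLset, ρG_R0set,
    ENNReal.toReal_ofReal (by norm_num), smul_eq_mul, smul_eq_mul, mul_sub]

lemma integrable_fL (L : ℝ) : Integrable (fL L) ρG :=
  (integrable_indicator_RLset L 1).sub (integrable_indicator_R0set 1)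

lemma abs_fL_le_one (L : ℝ) (x : G) : |fL L x| ≤ 1 :=
  abs_sub_le_of_nonneg_of_le (indicator_nonneg (fun _ _ => zero_le_one) x)
    (indicator_le_self' (fun _ _ => zero_le_one) x)
    (indicator_nonneg (fun _ _ => zero_le_one) x) (indicator_le_self' (fun _ _ => zero_le_one) x)

lemma memH1_fL {L : ℝ} (hL : 2 < L) : MemH1 (fL L) := by
  obtain ⟨R, hR, hRL, hR0⟩ := exists_isCZ_subset hL
  refine memH1_of_bounded hR (integrable_fL L) (fun x hx => ?_) (abs_fL_le_one L)
    ((integral_indicator_RLset_sub L 1 1).trans (by norm_num))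
  rw [fL, indicator_of_notMem (mt (@hRL x) hx), indicator_of_notMem (mt (@hR0 x) hx), sub_zero]

lemma le_integral_fL_mul_truncatedLog {L : ℝ} (hL : 2 < L) :
    8 * (Real.log L - Real.log 2) ≤ ∫ x, fL L x * truncatedLog L x.1 ∂ρG := by
  have hint : Integrable (fun x => fL L x * truncatedLog L x.1) ρG :=
    (integrable_fL L).mul_bdd
      ((continuous_truncatedLog L).measurable.comp measurable_fst).aestronglyMeasurable
      (ae_of_all _ fun x => abs_truncatedLog_le (by linarith) x.1)
  rw [← integral_indicator_RLset_sub L]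
  refine integral_mono ((integrable_indicator_RLset L _).sub (integrable_indicator_R0set _)) hint
    fun x => ?_
  simp only [fL, sub_mul]
  refine sub_le_sub ?_ ?_
  · by_cases hx : x ∈ RLset L
    · simp only [indicator_of_mem hx, one_mul]
      have hfst : L - 1 ≤ |x.1| := hx.1.1.trans (le_abs_self _)
      exact le_min (Real.log_le_log (by linarith) (by linarith))
        (Real.log_le_log (by linarith) (by linarith))
    · simp only [indicator_of_notMem hx, zero_mul, le_refl]
  · by_cases hx : x ∈ R0set
    · simp only [indicator_of_mem hx, one_mul]
      have hfst : |x.1| ≤ 1 := abs_le.2 hx.1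
      exact (min_le_left _ _).trans (Real.log_le_log (by positivity) (by linarith))
    · simp only [indicator_of_notMem hx, zero_mul, le_refl]

lemma log_sub_log_two_le_H1norm {L : ℝ} (hL : 2 < L) :
    Real.log L - Real.log 2 ≤ H1norm (fL L) := by
  obtain ⟨-, lam₀, A₀, hdecomp₀⟩ := memH1_fL hL
  refine le_csInf ⟨_, lam₀, A₀, hdecomp₀, rfl⟩ ?_
  rintro s ⟨lam, A, hdecomp, rfl⟩
  have hBMO : czBMO (fun x => truncatedLog L x.1) ≤ ENNReal.ofReal 8 :=
    (czBMO_fst_le (continuous_truncatedLog L).measurable).trans (lineBMO_truncatedLog_le L)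
  have hduality := abs_integral_mul_le_of_isH1Decomp
    (g := fun x => truncatedLog L x.1) hdecomp (integrable_fL L)
    ((continuous_truncatedLog L).measurable.comp measurable_fst).aestronglyMeasurable
    (fun x => abs_truncatedLog_le (by linarith) x.1) (by norm_num) hBMO
  linarith [le_integral_fL_mul_truncatedLog hL, le_abs_self (∫ x, fL L x * truncatedLog L x.1 ∂ρG)]

lemma toReal_lintegral_maxHeat_fL_pos {L : ℝ} (hL : Real.exp 6 ≤ L) :
    0 < (∫⁻ x, maxHeat (fL L) x ∂ρG).toReal := by
  obtain ⟨C, -, hupper⟩ := exists_lintegral_maxHeat_fL_le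
  have hL2 : 2 < L := by linarith [Real.add_one_le_exp 6]
  exact ENNReal.toReal_pos (lintegral_maxHeat_fL_pos hL2).ne'
    ((hupper L hL).trans_lt ENNReal.ofReal_lt_top).ne

lemma exists_mul_sqrt_log_le_ratio : ∃ c, 0 < c ∧ ∀ L, Real.exp 6 ≤ L →
    c * √(Real.log L) ≤ H1norm (fL L) / (∫⁻ x, maxHeat (fL L) x ∂ρG).toReal := by
  obtain ⟨C, hC, hupper⟩ := exists_lintegral_maxHeat_fL_le
  refine ⟨(2 * C)⁻¹, by positivity, fun L hL => ?_⟩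
  have hL2 : 2 < L := by linarith [Real.add_one_le_exp 6]
  have hlog : 6 ≤ Real.log L := (Real.le_log_iff_exp_le (by linarith)).2 hL
  have hsqrt : √(Real.log L) * √(Real.log L) = Real.log L := Real.mul_self_sqrt (by linarith)
  rw [le_div_iff₀ (toReal_lintegral_maxHeat_fL_pos hL)]
  calc (2 * C)⁻¹ * √(Real.log L) * (∫⁻ x, maxHeat (fL L) x ∂ρG).toReal
      ≤ (2 * C)⁻¹ * √(Real.log L) * (C * √(Real.log L)) := by
        gcongr
        exact ENNReal.toReal_le_of_le_ofReal (by positivity) (hupper L hL)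
    _ = Real.log L / 2 := by
        rw [mul_mul_mul_comm, hsqrt]
        field_simp
    _ ≤ Real.log L - Real.log 2 := by linarith [Real.log_two_lt_d9]
    _ ≤ H1norm (fL L) := log_sub_log_two_le_H1norm hL2

theorem no_converse_inequality :
    Tendsto (fun L : ℝ => H1norm (fL L) / (∫⁻ x, maxHeat (fL L) x ∂ρG).toReal)
      atTop atTop ∧
    ¬ ∃ C : ℝ, ∀ f : G → ℝ, MemH1 f →
        H1norm f ≤ C * (∫⁻ x, maxHeat f x ∂ρG).toReal := by
  obtain ⟨c, hc, hratio⟩ := exists_mul_sqrt_log_le_ratio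
  have hlarge : ∀ᶠ L : ℝ in atTop, Real.exp 6 ≤ L := eventually_ge_atTop _
  have hgrowth : Tendsto (fun L : ℝ => c * √(Real.log L)) atTop atTop :=
    (Real.tendsto_sqrt_atTop.comp Real.tendsto_log_atTop).const_mul_atTop hc
  have htendsto := tendsto_atTop_mono' atTop (hlarge.mono hratio) hgrowth
  refine ⟨htendsto, fun ⟨C, hC⟩ => ?_⟩
  obtain ⟨L, hgt, hL⟩ := ((htendsto.eventually_gt_atTop C).and hlarge).exists
  rw [lt_div_iff₀ (toReal_lintegral_maxHeat_fL_pos hL)] at hgt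
  exact hgt.not_ge (hC (fL L) (memH1_fL (by linarith [Real.add_one_le_exp 6])))
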